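/- arXiv:1705.08777 — 4 statements merged into one kernel-verified Lean document; each statement's English description precedes it below -/
import Mathlib

section
/- For every integer g ≥ 2, the homomorphism S_{2g+2} → Sp_{2g}(ℤ/2ℤ) induced by the permutation action of S_{2g+2} on the coordinates of V = (ℤ/2ℤ)^{2g+2}, descended to W = t^⊥/span(t), is injective; that is, the symmetric group S_{2g+2} embeds as a subgroup of Sp_{2g}(ℤ/2ℤ). -/
open Matrix

/-- The standard symplectic matrix `Ω`, block-diagonal with `2×2` blocks `[[0,1],[-1,0]]`. -/
def OmegaMat (g : ℕ) (R : Type) [CommRing R] : Matrix (Fin (2*g)) (Fin (2*g)) R :=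
  Matrix.of fun i j =>
    if (i : ℕ) + 1 = (j : ℕ) ∧ (j : ℕ) % 2 = 1 then 1
    else if (j : ℕ) + 1 = (i : ℕ) ∧ (i : ℕ) % 2 = 1 then -1 else 0

/-- The symplectic group `Sp_{2g}(R)`, as a set of invertible matrices:
those `S` with `SᵀΩS = Ω`. -/
def SpSet (g : ℕ) (R : Type) [CommRing R] : Set (GL (Fin (2*g)) R) :=
  {S | (S : Matrix (Fin (2*g)) (Fin (2*g)) R)ᵀ * OmegaMat g R * S = OmegaMat g R}

/-- The general symplectic group `GSp_{2g}(R)`, as a set of invertible matrices: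
those `S` with `SᵀΩS = m·Ω` for some unit `m` (the multiplier). -/
def GSpSet (g : ℕ) (R : Type) [CommRing R] : Set (GL (Fin (2*g)) R) :=
  {S | ∃ m : Rˣ, (S : Matrix (Fin (2*g)) (Fin (2*g)) R)ᵀ * OmegaMat g R * S = (m : R) • OmegaMat g R}

/-- The all-ones vector `t ∈ V = (ℤ/2ℤ)^{2g+2}`. -/
def tvec (g : ℕ) : Fin (2*g+2) → ZMod 2 := fun _ => 1

/-- The line spanned by `t`. -/
def tline (g : ℕ) : Submodule (ZMod 2) (Fin (2*g+2) → ZMod 2) :=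
  Submodule.span (ZMod 2) {tvec g}

/-- `t^⊥`: the vectors of `V` orthogonal to `t` for the standard bilinear form
`⟨u,v⟩ = ∑ uᵢvᵢ`, i.e. those whose coordinates sum to zero. -/
def tperp (g : ℕ) : Set (Fin (2*g+2) → ZMod 2) := {v | ∑ i, v i = 0}

/-- The matrix of the map `ψ : M → V` sending the symplectic basis vector `f_{1,n}`
(column `2n-2`, 0-based) of `M = (ℤ/2ℤ)^{2g}` to `ē_1 + ⋯ + ē_{2n}` and `f_{2,n}`
(column `2n-1`) to `ē_{2n+1} + ē_1 + ⋯ + ē_{2n-1}`; `ψ` composed with the quotient map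
`t^⊥ → W = t^⊥/span(t)` is the identification of `M` with `W` used to realize the
isometries of `W` as the matrix group `Sp_{2g}(ℤ/2ℤ)`. -/
def PsiMat (g : ℕ) : Matrix (Fin (2*g+2)) (Fin (2*g)) (ZMod 2) :=
  Matrix.of fun k j =>
    if (j : ℕ) % 2 = 0 then (if (k : ℕ) < (j : ℕ) + 2 then 1 else 0)
    else (if (k : ℕ) < (j : ℕ) ∨ (k : ℕ) = (j : ℕ) + 1 then 1 else 0)

/-- The permutation matrix of `σ`, acting on coordinates of `V`: `(P_σ v) k = v (σ⁻¹ k)`. -/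
def permMat (g : ℕ) (σ : Equiv.Perm (Fin (2*g+2))) :
    Matrix (Fin (2*g+2)) (Fin (2*g+2)) (ZMod 2) :=
  Matrix.of fun k j => if σ j = k then 1 else 0

/-- `A ∈ Sp_{2g}(ℤ/2ℤ)` is the matrix (w.r.t. the symplectic basis carried by `ψ`) of the
action of the permutation `σ ∈ S_{2g+2}` on `W = t^⊥/span(t)`: this says that each column of
`Ψ·A − P_σ·Ψ` lies in `span(t)`, i.e. `ψ(A·m) ≡ σ·ψ(m) mod t` for every `m ∈ M`.
The embedded copy of `S_{2g+2}` inside `Sp_{2g}(ℤ/2ℤ)` is the set of matrices representing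
some permutation in this sense. -/
def representsPerm (g : ℕ) (A : Matrix (Fin (2*g)) (Fin (2*g)) (ZMod 2))
    (σ : Equiv.Perm (Fin (2*g+2))) : Prop :=
  ∀ j, (fun k => (PsiMat g * A - permMat g σ * PsiMat g) k j) ∈ tline g


/-- Natural-number version of the entries of `PsiMat`. -/
def psiN (k j : ℕ) : ZMod 2 :=
  if j % 2 = 0 then (if k < j + 2 then 1 else 0)
    else (if k < j ∨ k = j + 1 then 1 else 0)

lemma psiMat_eq (g : ℕ) (k : Fin (2*g+2)) (j : Fin (2*g)) : PsiMat g k j = psiN k j := rfl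

lemma sum_if_lt (N n : ℕ) (h : n ≤ N) (f : ℕ → ZMod 2) :
    ∑ k ∈ Finset.range N, (if k < n then f k else 0) = ∑ k ∈ Finset.range n, f k := by
  rw [← Finset.sum_filter]
  congr 1
  ext k
  simp
  omega

lemma sum_psiN_even (g j : ℕ) (hj : j < 2*g) (h : j % 2 = 0) (f : ℕ → ZMod 2) :
    ∑ k ∈ Finset.range (2*g+2), psiN k j * f k = ∑ k ∈ Finset.range (j+2), f k := by
  rw [← sum_if_lt (2*g+2) (j+2) (by omega)]
  refine Finset.sum_congr rfl fun k _ => ?_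
  simp [psiN, h]

lemma sum_psiN_odd (g j : ℕ) (hj : j < 2*g) (h : ¬ j % 2 = 0) (f : ℕ → ZMod 2) :
    ∑ k ∈ Finset.range (2*g+2), psiN k j * f k
      = ∑ k ∈ Finset.range j, f k + f (j+1) := by
  rw [← sum_if_lt (2*g+2) j (by omega)]
  have : f (j+1) = ∑ k ∈ Finset.range (2*g+2), (if k = j+1 then f k else 0) := by
    rw [Finset.sum_ite_eq']
    simp
    omega
  rw [this, ← Finset.sum_add_distrib]
  refine Finset.sum_congr rfl fun k _ => ?_
  simp only [psiN, h, if_false]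
  by_cases h1 : k < j
  · have : k ≠ j + 1 := by omega
    simp [h1, this]
  · simp [h1]

lemma prefix_psiN (n i : ℕ) : ∑ k ∈ Finset.range n, psiN k i
    = ((if i % 2 = 0 then min n (i+2) else min n i + if i + 1 < n then 1 else 0 : ℕ) : ZMod 2) := by
  induction n with
  | zero => simp
  | succ n ih =>
    rw [Finset.sum_range_succ, ih]
    have : psiN n i = ((if i % 2 = 0 then (if n < i + 2 then 1 else 0)
      else (if n < i ∨ n = i + 1 then 1 else 0) : ℕ) : ZMod 2) := by
      unfold psiN; split_ifs <;> simp
    rw [this, ← Nat.cast_add]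
    congr 1
    split_ifs <;> omega

lemma zmod2_neg_one : (-1 : ZMod 2) = 1 := by decide

lemma omega_eq (g : ℕ) (i j : Fin (2*g)) : OmegaMat g (ZMod 2) i j =
    ((if ((i : ℕ) + 1 = (j : ℕ) ∧ (j : ℕ) % 2 = 1) ∨ ((j : ℕ) + 1 = (i : ℕ) ∧ (i : ℕ) % 2 = 1)
      then 1 else 0 : ℕ) : ZMod 2) := by
  simp only [OmegaMat, Matrix.of_apply, zmod2_neg_one]
  split_ifs <;> first | rfl | omega | simp

lemma psi_gram (g : ℕ) : (PsiMat g)ᵀ * PsiMat g = OmegaMat g (ZMod 2) := by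
  ext i j
  rw [omega_eq, Matrix.mul_apply]
  simp only [Matrix.transpose_apply, psiMat_eq]
  rw [Fin.sum_univ_eq_sum_range (fun k => psiN k i * psiN k j) (2*g+2)]
  obtain ⟨i, hi⟩ := i
  obtain ⟨j, hj⟩ := j
  simp only
  by_cases h : i % 2 = 0
  · rw [sum_psiN_even g i hi h, prefix_psiN, ZMod.natCast_eq_natCast_iff']
    split_ifs <;> omega
  · rw [sum_psiN_odd g i hi h, prefix_psiN]
    have : psiN (i+1) j = ((if j % 2 = 0 then (if i+1 < j + 2 then 1 else 0)
      else (if i+1 < j ∨ i+1 = j + 1 then 1 else 0) : ℕ) : ZMod 2) := by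
      unfold psiN; split_ifs <;> simp
    rw [this, ← Nat.cast_add, ZMod.natCast_eq_natCast_iff']
    split_ifs <;> omega

lemma omega_sq (g : ℕ) : OmegaMat g (ZMod 2) * OmegaMat g (ZMod 2) = 1 := by
  ext i j
  rw [Matrix.mul_apply]
  obtain ⟨i, hi⟩ := i
  have hl : (if i % 2 = 0 then i + 1 else i - 1) < 2 * g := by split_ifs <;> omega
  rw [Finset.sum_eq_single (⟨if i % 2 = 0 then i + 1 else i - 1, hl⟩ : Fin (2*g))]
  · rw [omega_eq, omega_eq, Matrix.one_apply, ← Nat.cast_mul]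
    have : (if (⟨i, hi⟩ : Fin (2*g)) = j then (1 : ZMod 2) else 0)
      = ((if i = (j : ℕ) then 1 else 0 : ℕ) : ZMod 2) := by
      simp [Fin.ext_iff]
    rw [this]
    congr 1
    obtain ⟨j, hj⟩ := j
    simp only
    split_ifs <;> omega
  · intro b _ hb
    rw [omega_eq]
    obtain ⟨b, hb'⟩ := b
    simp only [ne_eq, Fin.mk.injEq] at hb
    have : ¬ ((i + 1 = b ∧ b % 2 = 1) ∨ (b + 1 = i ∧ i % 2 = 1)) := by
      split_ifs at hb <;> omega
    simp [this]
  · simp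

lemma const_aux (g : ℕ) (f : ℕ → ZMod 2) 
    (h1 : ∀ j < 2*g, j % 2 = 0 → ∑ k ∈ Finset.range (j+2), f k = 0)
    (h2 : ∀ j < 2*g, ¬ j % 2 = 0 → ∑ k ∈ Finset.range j, f k + f (j+1) = 0)
    (h3 : ∑ k ∈ Finset.range (2*g+2), f k = 0) :
    ∀ m ≤ g, f (2*m) = f 0 ∧ f (2*m+1) = f 0 := by
  have hE : ∀ m ≤ g + 1, ∑ k ∈ Finset.range (2*m), f k = 0 := by
    intro m hm
    rcases m with _ | m
    · simp
    · by_cases h : m = g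
      · subst h; exact h3
      · exact h1 (2*m) (by omega) (by omega)
  have z : ∀ a b : ZMod 2, a + b = 0 → b = a := by decide
  have hP : ∀ m ≤ g, f (2*m+1) = f (2*m) := by
    intro m hm
    have a := hE m (by omega)
    have b := hE (m+1) (by omega)
    rw [show 2*(m+1) = 2*m+1+1 by ring, Finset.sum_range_succ, Finset.sum_range_succ, a,
      zero_add] at b
    exact z _ _ b
  intro m
  induction m with
  | zero => intro hm; exact ⟨rfl, hP 0 hm⟩
  | succ m ih =>
    intro hm
    have e : f (2*(m+1)) = f 0 := by
      have a := hE m (by omega)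
      have b := h2 (2*m+1) (by omega) (by omega)
      rw [Finset.sum_range_succ, a, zero_add] at b
      exact (z _ _ b).trans (ih (by omega)).1
    exact ⟨e, (hP _ hm).trans e⟩

/-- A vector orthogonal to the image of `Ψ` and to `t` is constant. -/
lemma const_of_orth (g : ℕ) (w : Fin (2*g+2) → ZMod 2) (h : (PsiMat g)ᵀ *ᵥ w = 0)
    (h3 : ∑ i, w i = 0) : ∃ c, ∀ k, w k = c := by
  let f : ℕ → ZMod 2 := fun n => if hn : n < 2*g+2 then w ⟨n, hn⟩ else 0
  have hf : ∀ k : Fin (2*g+2), f k = w k := fun k => by simp [f]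
  have hj : ∀ j < 2*g, ∑ k ∈ Finset.range (2*g+2), psiN k j * f k = 0 := by
    intro j hj
    have := congrFun h ⟨j, hj⟩
    simp only [Matrix.mulVec, dotProduct, Matrix.transpose_apply, psiMat_eq, Pi.zero_apply] at this
    rw [← Fin.sum_univ_eq_sum_range (fun k => psiN k j * f k) (2*g+2)]
    simpa only [hf] using this
  have key := const_aux g f
    (fun j h h' => by rw [← sum_psiN_even g j h h']; exact hj j h)
    (fun j h h' => by rw [← sum_psiN_odd g j h h']; exact hj j h)
    (by rw [← Fin.sum_univ_eq_sum_range f (2*g+2)]; simpa only [hf] using h3)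
  refine ⟨f 0, fun k => ?_⟩
  rw [← hf k]
  obtain ⟨k, hk⟩ := k
  have := key (k/2) (by omega)
  rcases Nat.mod_two_eq_zero_or_one k with h0 | h0
  · have e : 2 * (k/2) = k := by omega
    rw [e] at this; exact this.1
  · have e : 2 * (k/2) + 1 = k := by omega
    rw [e] at this; exact this.2

lemma psi_col_sum (g : ℕ) (j : Fin (2*g)) : ∑ k, PsiMat g k j = 0 := by
  simp only [psiMat_eq]
  rw [Fin.sum_univ_eq_sum_range (fun k => psiN k j) (2*g+2), prefix_psiN]
  obtain ⟨j, hj⟩ := j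
  rw [show (0 : ZMod 2) = ((0:ℕ) : ZMod 2) by simp, ZMod.natCast_eq_natCast_iff']
  simp only
  split_ifs <;> omega

lemma psiT_const (g : ℕ) (c : ZMod 2) : (PsiMat g)ᵀ *ᵥ (fun _ => c) = 0 := by
  ext j
  simp [Matrix.mulVec, dotProduct, ← Finset.sum_mul, psi_col_sum]

lemma sum_const_zero (g : ℕ) (c : ZMod 2) : ∑ _k : Fin (2*g+2), c = 0 := by
  have : (2 : ZMod 2) = 0 := by decide
  simp [this]

/-- `ΨΩΨᵀ` is the projection of `t^⊥` to the image of `Ψ` modulo `t`. -/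
lemma proj (g : ℕ) (w : Fin (2*g+2) → ZMod 2) (h : ∑ i, w i = 0) :
    ∃ c, ∀ k, (PsiMat g *ᵥ (OmegaMat g (ZMod 2) *ᵥ ((PsiMat g)ᵀ *ᵥ w))) k - w k = c := by
  refine const_of_orth g (PsiMat g *ᵥ (OmegaMat g (ZMod 2) *ᵥ ((PsiMat g)ᵀ *ᵥ w)) - w) ?_ ?_
  · rw [Matrix.mulVec_sub, Matrix.mulVec_mulVec, Matrix.mulVec_mulVec, psi_gram, omega_sq,
      Matrix.one_mulVec, sub_self]
  · simp only [Pi.sub_apply, Finset.sum_sub_distrib, h, sub_zero]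
    simp only [Matrix.mulVec, dotProduct]
    rw [Finset.sum_comm]
    simp [← Finset.sum_mul, psi_col_sum]

lemma mem_tline (g : ℕ) (v : Fin (2*g+2) → ZMod 2) : v ∈ tline g ↔ ∃ c, ∀ k, v k = c := by
  rw [tline, Submodule.mem_span_singleton]
  constructor
  · rintro ⟨c, rfl⟩; exact ⟨c, fun k => by simp [tvec]⟩
  · rintro ⟨c, h⟩; exact ⟨c, by ext k; simp [tvec, h]⟩

/-- The matrix all of whose rows equal `c`. -/
def rowMat (g : ℕ) (c : Fin (2*g) → ZMod 2) : Matrix (Fin (2*g+2)) (Fin (2*g)) (ZMod 2) :=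
  Matrix.of fun _ j => c j

lemma rep_iff (g : ℕ) (A : Matrix (Fin (2*g)) (Fin (2*g)) (ZMod 2))
    (σ : Equiv.Perm (Fin (2*g+2))) :
    representsPerm g A σ ↔ ∃ c, permMat g σ * PsiMat g = PsiMat g * A + rowMat g c := by
  simp only [representsPerm, mem_tline]
  rw [Classical.skolem]
  have z : ∀ a b c : ZMod 2, a - b = c ↔ b = a + c := by decide
  refine exists_congr fun c => ?_
  constructor
  · intro h; ext k j
    exact (z _ _ _).1 (h j k)
  · intro h j k
    exact (z _ _ _).2 (congrFun (congrFun h k) j)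

lemma psiT_row (g : ℕ) (c : Fin (2*g) → ZMod 2) : (PsiMat g)ᵀ * rowMat g c = 0 := by
  ext i j
  simp [Matrix.mul_apply, rowMat, ← Finset.sum_mul, psi_col_sum]

lemma rowT_row (g : ℕ) (c : Fin (2*g) → ZMod 2) : (rowMat g c)ᵀ * rowMat g c = 0 := by
  ext i j
  simp only [Matrix.mul_apply, rowMat, Matrix.transpose_apply, Matrix.of_apply]
  exact sum_const_zero g _

lemma rowT_psi (g : ℕ) (c : Fin (2*g) → ZMod 2) : (rowMat g c)ᵀ * PsiMat g = 0 := by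
  have := congrArg Matrix.transpose (psiT_row g c)
  simpa [Matrix.transpose_mul] using this

lemma permMat_mul_apply (g : ℕ) (σ : Equiv.Perm (Fin (2*g+2)))
    (M : Matrix (Fin (2*g+2)) (Fin (2*g)) (ZMod 2)) (k : Fin (2*g+2)) (j : Fin (2*g)) :
    (permMat g σ * M) k j = M (σ⁻¹ k) j := by
  simp only [Matrix.mul_apply, permMat, Matrix.of_apply]
  rw [Finset.sum_eq_single (σ⁻¹ k)]
  · simp
  · intro b _ hb
    have : σ b ≠ k := fun h => hb (by simp [← h])
    simp [this]
  · simp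

lemma rep_formula (g : ℕ) (A : Matrix (Fin (2*g)) (Fin (2*g)) (ZMod 2))
    (σ : Equiv.Perm (Fin (2*g+2))) (h : representsPerm g A σ) :
    A = OmegaMat g (ZMod 2) * ((PsiMat g)ᵀ * (permMat g σ * PsiMat g)) := by
  obtain ⟨c, hc⟩ := (rep_iff g A σ).1 h
  rw [hc, Matrix.mul_add, psiT_row, add_zero, ← Matrix.mul_assoc (PsiMat g)ᵀ, psi_gram,
    ← Matrix.mul_assoc, omega_sq, Matrix.one_mul]

lemma rep_exists (g : ℕ) (σ : Equiv.Perm (Fin (2*g+2))) :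
    representsPerm g (OmegaMat g (ZMod 2) * ((PsiMat g)ᵀ * (permMat g σ * PsiMat g))) σ := by
  intro j
  rw [mem_tline]
  obtain ⟨c, hc⟩ := proj g (fun k => (permMat g σ * PsiMat g) k j) (by
    simp only [permMat_mul_apply]
    rw [Equiv.sum_comp σ⁻¹ (fun k => PsiMat g k j)]
    exact psi_col_sum g j)
  exact ⟨c, fun k => hc k⟩

lemma rep_symp (g : ℕ) (A : Matrix (Fin (2*g)) (Fin (2*g)) (ZMod 2))
    (σ : Equiv.Perm (Fin (2*g+2))) (h : representsPerm g A σ) :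
    Aᵀ * OmegaMat g (ZMod 2) * A = OmegaMat g (ZMod 2) := by
  obtain ⟨c, hc⟩ := (rep_iff g A σ).1 h
  have h1 : (permMat g σ * PsiMat g)ᵀ * (permMat g σ * PsiMat g) = OmegaMat g (ZMod 2) := by
    rw [← psi_gram]
    ext i j
    rw [Matrix.mul_apply, Matrix.mul_apply]
    simp only [Matrix.transpose_apply, permMat_mul_apply]
    exact Equiv.sum_comp σ⁻¹ (fun k => PsiMat g k i * PsiMat g k j)
  rw [hc, Matrix.transpose_add, Matrix.transpose_mul, Matrix.add_mul, Matrix.mul_add,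
    Matrix.mul_add, rowT_row, ← Matrix.mul_assoc (rowMat g c)ᵀ, rowT_psi,
    Matrix.mul_assoc Aᵀ _ (rowMat g c), psiT_row, Matrix.mul_assoc Aᵀ,
    ← Matrix.mul_assoc (PsiMat g)ᵀ, psi_gram] at h1
  simpa [Matrix.mul_assoc] using h1

lemma rep_mul (g : ℕ) (σ τ : Equiv.Perm (Fin (2*g+2)))
    (A B : Matrix (Fin (2*g)) (Fin (2*g)) (ZMod 2))
    (hA : representsPerm g A σ) (hB : representsPerm g B τ) :
    representsPerm g (A * B) (σ * τ) := by
  obtain ⟨c, hc⟩ := (rep_iff g A σ).1 hA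
  obtain ⟨d, hd⟩ := (rep_iff g B τ).1 hB
  refine (rep_iff g _ _).2 ⟨c ᵥ* B + d, ?_⟩
  have e1 : permMat g (σ * τ) * PsiMat g = permMat g σ * (permMat g τ * PsiMat g) := by
    ext k j
    rw [permMat_mul_apply, permMat_mul_apply, permMat_mul_apply, _root_.mul_inv_rev]
    rfl
  have e2 : permMat g σ * rowMat g d = rowMat g d := by
    ext k j
    rw [permMat_mul_apply]; rfl
  have e3 : rowMat g c * B = rowMat g (c ᵥ* B) := rfl
  have e4 : rowMat g (c ᵥ* B + d) = rowMat g (c ᵥ* B) + rowMat g d := rfl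
  rw [e1, hd, Matrix.mul_add, e2, ← Matrix.mul_assoc, hc, Matrix.add_mul, e3, e4,
    Matrix.mul_assoc, add_assoc]

lemma rep_inj (g : ℕ) (hg : 2 ≤ g) (σ τ : Equiv.Perm (Fin (2*g+2)))
    (A : Matrix (Fin (2*g)) (Fin (2*g)) (ZMod 2))
    (hA : representsPerm g A σ) (hB : representsPerm g A τ) : σ = τ := by
  obtain ⟨c, hc⟩ := (rep_iff g A σ).1 hA
  obtain ⟨d, hd⟩ := (rep_iff g A τ).1 hB
  let ρ : Equiv.Perm (Fin (2*g+2)) := τ⁻¹ * σ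
  -- rows of `Ψ` change under `ρ` by a constant
  have hrow : ∀ i j, PsiMat g i j - PsiMat g (ρ i) j = c j - d j := by
    intro i j
    have a := congrFun (congrFun hc (σ i)) j
    have b := congrFun (congrFun hd (σ i)) j
    rw [permMat_mul_apply] at a b
    rw [show σ⁻¹ (σ i) = i from σ.symm_apply_apply i] at a
    simp only [Matrix.add_apply, rowMat, Matrix.of_apply] at a b
    change _ - PsiMat g (τ⁻¹ (σ i)) j = _
    rw [a, b]; ring
  have hinv : ∀ w : Fin (2*g+2) → ZMod 2, ∑ i, w i = 0 → ∃ e, ∀ i, w i - w (ρ i) = e := by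
    intro w hw
    obtain ⟨e, he⟩ := proj g w hw
    set x := OmegaMat g (ZMod 2) *ᵥ ((PsiMat g)ᵀ *ᵥ w)
    refine ⟨∑ j, (c j - d j) * x j, fun i => ?_⟩
    have h1 := he i
    have h2 := he (ρ i)
    have : w i - w (ρ i) = (PsiMat g *ᵥ x) i - (PsiMat g *ᵥ x) (ρ i) := by
      linear_combination h2 - h1
    rw [this]
    simp only [Matrix.mulVec, dotProduct, ← Finset.sum_sub_distrib, ← sub_mul, hrow]
  have hρ : ρ = 1 := by
    ext1 a
    by_contra hne
    simp only [Equiv.Perm.one_apply] at hne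
    obtain ⟨b, hb⟩ : ∃ b, b ∉ ({a, ρ a} : Finset (Fin (2*g+2))) := by
      by_contra! hall
      have h1 := Finset.card_le_card (fun x _ => hall x : Finset.univ ⊆ _)
      have h2 := Finset.card_le_two (a := a) (b := ρ a)
      simp at h1
      omega
    obtain ⟨k, hk⟩ : ∃ k, k ∉ ({a, b, ρ⁻¹ a, ρ⁻¹ b} : Finset (Fin (2*g+2))) := by
      by_contra! hall
      have h1 := Finset.card_le_card (fun x _ => hall x : Finset.univ ⊆ _)
      have h2 := Finset.card_le_four (a := a) (b := b) (c := ρ⁻¹ a) (d := ρ⁻¹ b)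
      rw [Finset.card_univ, Fintype.card_fin] at h1
      omega
    simp only [Finset.mem_insert, Finset.mem_singleton, not_or] at hb hk
    obtain ⟨k1, k2, k3, k4⟩ := hk
    have k3' : ρ k ≠ a := fun h => k3 (by rw [← h]; simp)
    have k4' : ρ k ≠ b := fun h => k4 (by rw [← h]; simp)
    obtain ⟨e, he⟩ := hinv (Pi.single a 1 + Pi.single b 1) (by
      simp [Finset.sum_add_distrib]; decide)
    have h1 := he k
    have h2 := he a
    rw [← h1] at h2
    have hab : a ≠ b := fun h => hb.1 h.symm
    have hρb : ρ a ≠ b := fun h => hb.2 h.symm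
    simp [Pi.single_apply, k1, k2, k3', k4', hab, hρb, hne] at h2
  have : τ * ρ = τ := by rw [hρ, mul_one]
  simpa [ρ] using this

/-- For every `g ≥ 2`, the homomorphism `S_{2g+2} → Sp_{2g}(ℤ/2ℤ)` induced by the permutation
action of `S_{2g+2}` on the coordinates of `V = (ℤ/2ℤ)^{2g+2}`, descended to
`W = t^⊥/span(t)`, is injective: `S_{2g+2}` embeds as a subgroup of `Sp_{2g}(ℤ/2ℤ)`.
Concretely: every permutation is represented by a symplectic matrix, the representing matrix
is unique, the assignment is multiplicative, and distinct permutations have distinct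
representing matrices (equivalently, a matrix represents at most one permutation). -/
theorem maximal_monodromy_stmt0 (g : ℕ) (hg : 2 ≤ g) :
    (∀ σ : Equiv.Perm (Fin (2*g+2)), ∃ A : Matrix (Fin (2*g)) (Fin (2*g)) (ZMod 2),
        Aᵀ * OmegaMat g (ZMod 2) * A = OmegaMat g (ZMod 2) ∧ representsPerm g A σ) ∧
    (∀ (σ : Equiv.Perm (Fin (2*g+2))) (A B : Matrix (Fin (2*g)) (Fin (2*g)) (ZMod 2)),
        representsPerm g A σ → representsPerm g B σ → A = B) ∧
    (∀ (σ τ : Equiv.Perm (Fin (2*g+2))) (A B : Matrix (Fin (2*g)) (Fin (2*g)) (ZMod 2)),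
        representsPerm g A σ → representsPerm g B τ → representsPerm g (A * B) (σ * τ)) ∧
    (∀ (σ τ : Equiv.Perm (Fin (2*g+2))) (A : Matrix (Fin (2*g)) (Fin (2*g)) (ZMod 2)),
        representsPerm g A σ → representsPerm g A τ → σ = τ) := by
  exact ⟨fun σ => ⟨_, rep_symp g _ σ (rep_exists g σ), rep_exists g σ⟩,
    fun σ A B hA hB => (rep_formula g A σ hA).trans (rep_formula g B σ hB).symm,
    fun σ τ A B hA hB => rep_mul g σ τ A B hA hB,
    fun σ τ A hA hB => rep_inj g hg σ τ A hA hB⟩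
end

section
/- Let g ≥ 2 and let H ⊆ GSp_{2g}(ℤ_2) be a subgroup such that H equals the full preimage under mod-2 reduction of its mod-2 image H(2), and such that H(2) contains the embedded copy of S_{2g+1}. Then the closure of the commutator subgroup of H equals the full preimage of the commutator subgroup [H(2),H(2)] under the reduction map Sp_{2g}(ℤ_2) → Sp_{2g}(ℤ/2ℤ). -/
open Matrix

/-- Entrywise mod-2 reduction `GL_{2g}(ℤ_2) → GL_{2g}(ℤ/2ℤ)`. -/
noncomputable def redMod2 (g : ℕ) : GL (Fin (2*g)) ℤ_[2] →* GL (Fin (2*g)) (ZMod 2) :=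
  Units.map ((PadicInt.toZMod).mapMatrix.toMonoidHom)

namespace MM

variable {g : ℕ}

/-- the partner index -/
def sw (g : ℕ) (i : Fin (2*g)) : Fin (2*g) :=
  ⟨if (i:ℕ) % 2 = 0 then i + 1 else i - 1, by have := i.2; split_ifs <;> omega⟩

lemma sw_val (i : Fin (2*g)) : ((sw g i : Fin (2*g)) : ℕ) = if (i:ℕ) % 2 = 0 then (i:ℕ) + 1 else i - 1 := rfl

lemma sw_sw (i : Fin (2*g)) : sw g (sw g i) = i := by
  apply Fin.ext
  rw [sw_val, sw_val]
  split_ifs <;> omega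

lemma sw_ne (i : Fin (2*g)) : sw g i ≠ i := by
  intro h
  have := congrArg Fin.val h
  rw [sw_val] at this
  split_ifs at this <;> omega

/-- sign -/
def sg (R : Type) [CommRing R] (i : Fin (2*g)) : R := if (i:ℕ) % 2 = 0 then 1 else -1

variable {R : Type} [CommRing R]

lemma omega_apply (i j : Fin (2*g)) : OmegaMat g R i j = if j = sw g i then sg R i else 0 := by
  have hj : (j = sw g i) ↔ (j:ℕ) = if (i:ℕ) % 2 = 0 then (i:ℕ) + 1 else i - 1 := by
    rw [Fin.ext_iff, sw_val]
  simp only [OmegaMat, Matrix.of_apply, hj, sg]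
  by_cases h : (i:ℕ) % 2 = 0
  · simp only [h, if_true]
    by_cases h1 : (i:ℕ) + 1 = j
    · rw [if_pos ⟨h1, by omega⟩, if_pos h1.symm]
    · rw [if_neg (fun h => h1 h.1), if_neg (by omega), if_neg (by omega)]
  · simp only [h, if_false]
    rw [if_neg (by omega)]
    by_cases h1 : (j:ℕ) + 1 = i
    · rw [if_pos ⟨h1, by omega⟩, if_pos (by omega)]
    · rw [if_neg (fun h => h1 h.1), if_neg (by omega)]

lemma sg_sw (i : Fin (2*g)) : sg R (sw g i) = - sg R i := by
  simp only [sg, sw_val]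
  split_ifs <;> first | omega | simp

lemma sg_sq (i : Fin (2*g)) : sg R i * sg R i = 1 := by
  simp only [sg]; split_ifs <;> simp

lemma omega_mulVec (v : Fin (2*g) → R) (i) : (OmegaMat g R *ᵥ v) i = sg R i * v (sw g i) := by
  simp [Matrix.mulVec, dotProduct, omega_apply]

lemma omega_transpose : (OmegaMat g R)ᵀ = - OmegaMat g R := by
  ext i j
  simp only [Matrix.transpose_apply, Matrix.neg_apply, omega_apply]
  by_cases h : j = sw g i
  · subst h; simp [sw_sw, sg_sw]
  · rw [if_neg h, if_neg]
    · simp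
    · intro h'; exact h (by rw [h', sw_sw])

lemma omega_sq : OmegaMat g R * OmegaMat g R = -1 := by
  ext i j
  rw [Matrix.mul_apply]
  simp only [omega_apply, ite_mul, zero_mul, Finset.sum_ite_eq', Finset.mem_univ, if_true, sw_sw,
    sg_sw, Matrix.neg_apply, Matrix.one_apply]
  by_cases h : i = j
  · subst h; simp [sg_sq]
  · rw [if_neg h, if_neg (fun h' => h h'.symm)]; simp

lemma vecMul_omega (v : Fin (2*g) → R) : v ᵥ* OmegaMat g R = - (OmegaMat g R *ᵥ v) := by
  rw [← Matrix.mulVec_transpose, omega_transpose, Matrix.neg_mulVec]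

lemma omega_alt (v : Fin (2*g) → R) : v ⬝ᵥ (OmegaMat g R *ᵥ v) = 0 := by
  simp only [dotProduct, omega_mulVec]
  refine Finset.sum_involution (fun i _ => sw g i) ?_ ?_ ?_ ?_
  · intro i _; rw [sw_sw, sg_sw]; ring
  · intro i _ _; exact sw_ne i
  · intros; exact Finset.mem_univ _
  · intros; exact sw_sw _

/-- nilpotent part of transvection -/
def nil (v : Fin (2*g) → R) : Matrix (Fin (2*g)) (Fin (2*g)) R := Matrix.vecMulVec v v * OmegaMat g R

lemma vvOvv (v : Fin (2*g) → R) : Matrix.vecMulVec v v * OmegaMat g R * Matrix.vecMulVec v v = 0 := by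
  rw [Matrix.mul_assoc, Matrix.mul_vecMulVec, Matrix.vecMulVec_mul_vecMulVec, omega_alt]
  simp

lemma nil_sq (v : Fin (2*g) → R) : nil v * nil v = 0 := by
  rw [nil, ← Matrix.mul_assoc, vvOvv, Matrix.zero_mul]

/-- transvection -/
def tv (v : Fin (2*g) → R) (c : R) : GL (Fin (2*g)) R where
  val := 1 + c • nil v
  inv := 1 - c • nil v
  val_inv := by
    simp [mul_sub, add_mul, nil_sq]
  inv_val := by
    simp [mul_add, sub_mul, nil_sq]

lemma nil_transpose (v : Fin (2*g) → R) : (nil v)ᵀ = - (OmegaMat g R * Matrix.vecMulVec v v) := by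
  rw [nil, Matrix.transpose_mul, omega_transpose, Matrix.transpose_vecMulVec, Matrix.neg_mul]

lemma tv_mem (v : Fin (2*g) → R) (c : R) : tv v c ∈ SpSet g R := by
  change (1 + c • nil v)ᵀ * OmegaMat g R * (1 + c • nil v) = OmegaMat g R
  rw [Matrix.transpose_add, Matrix.transpose_smul, nil_transpose, Matrix.transpose_one]
  have h : OmegaMat g R * vecMulVec v v * OmegaMat g R * nil v = 0 := by
    have e : OmegaMat g R * vecMulVec v v * OmegaMat g R * nil v =
        OmegaMat g R * (vecMulVec v v * OmegaMat g R * vecMulVec v v) * OmegaMat g R := by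
      rw [nil]; simp only [Matrix.mul_assoc]
    rw [e, vvOvv, Matrix.mul_zero, Matrix.zero_mul]
  simp only [Matrix.add_mul, Matrix.mul_add, Matrix.one_mul, Matrix.mul_one, Matrix.smul_mul, Matrix.mul_smul,
    Matrix.neg_mul, h]
  rw [nil]
  simp [Matrix.mul_assoc]

/-- diag(1,-1,...) -/
def dd (g : ℕ) (R : Type) [CommRing R] : GL (Fin (2*g)) R where
  val := Matrix.diagonal (sg R)
  inv := Matrix.diagonal (sg R)
  val_inv := by simp [Matrix.diagonal_mul_diagonal, sg_sq]
  inv_val := by simp [Matrix.diagonal_mul_diagonal, sg_sq]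

lemma dd_mem : dd g R ∈ GSpSet g R := by
  refine ⟨-1, ?_⟩
  change (Matrix.diagonal (sg R))ᵀ * OmegaMat g R * Matrix.diagonal (sg R) = _
  ext i j
  rw [Matrix.diagonal_transpose, Matrix.mul_diagonal, Matrix.diagonal_mul, Matrix.smul_apply, omega_apply]
  by_cases h : j = sw g i
  · subst h; simp only [if_true, sg_sw, Units.val_neg, Units.val_one, smul_eq_mul]
    linear_combination (-sg R i) * sg_sq (R := R) i
  · simp [h]

lemma dd_conj (j : Fin (2*g)) (hj : (j:ℕ) % 2 = 0) :
    Matrix.diagonal (sg R) * nil (Pi.single j (1:R)) * Matrix.diagonal (sg R) = - nil (Pi.single j (1:R)) := by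
  ext a b
  rw [Matrix.mul_diagonal, Matrix.diagonal_mul, Matrix.neg_apply, nil, Matrix.vecMulVec_mul, Matrix.vecMulVec_apply,
    vecMul_omega, Pi.neg_apply, omega_mulVec]
  by_cases h : a = j
  · subst h
    by_cases h2 : sw g b = a
    · have : b = sw g a := by rw [← h2, sw_sw]
      subst this
      have h3 : sg R a = 1 := by simp [sg, hj]
      simp [sg_sw, sw_sw, h3]
    · simp [h2]
  · simp [h]

lemma comm_eq (j : Fin (2*g)) (hj : (j:ℕ) % 2 = 0) (c : R) :
    ((dd g R * tv (Pi.single j 1) c * (dd g R)⁻¹ * (tv (Pi.single j 1) c)⁻¹ : GL (Fin (2*g)) R) : Matrix (Fin (2*g)) (Fin (2*g)) R)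
      = 1 + (2 * c) • (- nil (Pi.single j (1:R))) := by
  change Matrix.diagonal (sg R) * (1 + c • nil _) * Matrix.diagonal (sg R) * (1 - c • nil _) = _
  have h1 : Matrix.diagonal (sg (g := g) R) * Matrix.diagonal (sg R) = 1 := by
    simp [Matrix.diagonal_mul_diagonal, sg_sq]
  have : Matrix.diagonal (sg R) * (1 + c • nil (Pi.single j (1:R))) * Matrix.diagonal (sg R) = 1 - c • nil (Pi.single j (1:R)) := by
    rw [Matrix.mul_add, Matrix.add_mul, Matrix.mul_one, h1, Matrix.mul_smul, Matrix.smul_mul, dd_conj j hj]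
    simp [sub_eq_add_neg]
  rw [this]
  simp only [mul_sub, sub_mul, mul_one, one_mul, Matrix.smul_mul, Matrix.mul_smul, nil_sq]
  module

/-! combinatorics mod 2 -/

/-- the vector with `ψ p_i = e_0 + e_i` -/
def pv (g : ℕ) (i : ℕ) : Fin (2*g) → ZMod 2 := fun l =>
  if i % 2 = 1 then (if (l:ℕ) < i then 1 else 0) else (if (l:ℕ) + 2 < i ∨ (l:ℕ) + 1 = i then 1 else 0)

lemma pv_zero : pv g 0 = 0 := by
  ext l; simp [pv]

lemma pv_one (hg : 2 ≤ g) : pv g 1 = Pi.single ⟨0, by omega⟩ 1 := by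
  ext l; simp [pv, Pi.single_apply, Fin.ext_iff]

lemma pv_step1 (m : ℕ) (hm : 2*m+2 ≤ 2*g) :
    pv g (2*m+2) = pv g (2*m+1) + Pi.single ⟨2*m, by omega⟩ 1 + Pi.single ⟨2*m+1, by omega⟩ 1 := by
  ext l
  simp only [pv, Pi.add_apply, Pi.single_apply, Fin.ext_iff]
  have h1 : ¬ ((2*m+2) % 2 = 1) := by omega
  have h2 : (2*m+1) % 2 = 1 := by omega
  simp only [h1, h2, if_true, if_false]
  split_ifs <;> first | omega | decide

lemma pv_step2 (m : ℕ) (hm : 2*m+3 ≤ 2*g) :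
    pv g (2*m+3) = pv g (2*m+2) + Pi.single ⟨2*m, by omega⟩ 1 + Pi.single ⟨2*m+2, by omega⟩ 1 := by
  ext l
  simp only [pv, Pi.add_apply, Pi.single_apply, Fin.ext_iff]
  have h1 : ¬ ((2*m+2) % 2 = 1) := by omega
  have h2 : (2*m+3) % 2 = 1 := by omega
  simp only [h1, h2, if_true, if_false]
  split_ifs <;> first | omega | decide

lemma psi_single (j : Fin (2*g)) (k) : (PsiMat g *ᵥ Pi.single j 1) k = PsiMat g k j := by
  simp

lemma psi_pv (hg : 2 ≤ g) (i : ℕ) (hi : i ≤ 2*g) (k : Fin (2*g+2)) :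
    (PsiMat g *ᵥ pv g i) k = (if (k:ℕ) = 0 then 1 else 0) + (if (k:ℕ) = i then 1 else 0) := by
  induction i with
  | zero => rw [pv_zero]; simp only [Matrix.mulVec_zero, Pi.zero_apply]; split_ifs <;> decide
  | succ i ih =>
    rcases Nat.even_or_odd' i with ⟨m, rfl | rfl⟩
    · rcases m with _ | m
      · rw [Nat.mul_zero, Nat.zero_add, pv_one hg, psi_single]
        simp only [PsiMat, Matrix.of_apply]
        split_ifs <;> first | omega | decide
      · have e : 2 * (m+1) + 1 = 2*m+3 := by ring
        have e' : 2 * (m+1) = 2*m+2 := by ring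
        rw [e'] at ih
        rw [e, pv_step2 m (by omega), Matrix.mulVec_add, Matrix.mulVec_add, Pi.add_apply, Pi.add_apply,
          psi_single, psi_single, ih (by omega)]
        simp only [PsiMat, Matrix.of_apply]
        split_ifs <;> first | omega | decide
    · have e : 2 * m + 1 + 1 = 2*m+2 := by ring
      rw [e, pv_step1 m (by omega), Matrix.mulVec_add, Matrix.mulVec_add, Pi.add_apply, Pi.add_apply,
          psi_single, psi_single, ih (by omega)]
      simp only [PsiMat, Matrix.of_apply]
      split_ifs <;> first | omega | decide

lemma sg2 (i : Fin (2*g)) : sg (ZMod 2) i = 1 := by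
  simp only [sg]; split_ifs <;> decide

lemma omega_pv (i : ℕ) (hi : i ≤ 2*g) (l : Fin (2*g)) :
    (OmegaMat g (ZMod 2) *ᵥ pv g i) l = PsiMat g ⟨0, by omega⟩ l + PsiMat g ⟨i, by omega⟩ l := by
  rw [omega_mulVec, sg2, one_mul]
  simp only [pv, sw_val, PsiMat, Matrix.of_apply]
  split_ifs <;> first | omega | decide

lemma zmod_add_self {α : Type*} [AddCommGroup α] [Module (ZMod 2) α] (x : α) : x + x = 0 := by
  have : (2 : ZMod 2) • x = 0 := by
    have h : (2 : ZMod 2) = 0 := by decide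
    rw [h, zero_smul]
  rwa [two_smul] at this

lemma h22 {α : Type*} [AddCommGroup α] [Module (ZMod 2) α] (a b x : α) : x = a + b + x + a + b := by
  rw [show a + b + x + a + b = x + (a + a) + (b + b) by abel, zmod_add_self, zmod_add_self]
  simp

lemma psi_pair (hg : 2 ≤ g) {a b : ℕ} (ha : a ≤ 2*g) (hb : b ≤ 2*g) (k : Fin (2*g+2)) :
    (PsiMat g *ᵥ (pv g a + pv g b)) k = (if (k:ℕ) = a then 1 else 0) + (if (k:ℕ) = b then 1 else 0) := by
  rw [Matrix.mulVec_add, Pi.add_apply, psi_pv hg a ha, psi_pv hg b hb]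
  have := zmod_add_self (if (k:ℕ) = 0 then (1 : ZMod 2) else 0)
  linear_combination this

lemma omega_pair {a b : ℕ} (ha : a ≤ 2*g) (hb : b ≤ 2*g) (l : Fin (2*g)) :
    ((pv g a + pv g b) ᵥ* OmegaMat g (ZMod 2)) l
      = PsiMat g ⟨a, by omega⟩ l + PsiMat g ⟨b, by omega⟩ l := by
  rw [vecMul_omega, Pi.neg_apply, Matrix.mulVec_add, Pi.add_apply, omega_pv a ha, omega_pv b hb]
  generalize PsiMat g ⟨0, _⟩ l = x
  generalize PsiMat g ⟨a, _⟩ l = y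
  generalize PsiMat g ⟨b, _⟩ l = z
  revert x y z; decide

lemma represents (hg : 2 ≤ g) {a b : ℕ} (ha : a ≤ 2*g) (hb : b ≤ 2*g) (hab : a ≠ b) :
    representsPerm g ((tv (pv g a + pv g b) 1 : GL (Fin (2*g)) (ZMod 2)) : Matrix _ _ _)
      (Equiv.swap ⟨a, by omega⟩ ⟨b, by omega⟩) := by
  intro j
  convert Submodule.zero_mem (tline g) using 1
  funext k
  change (PsiMat g * ((1 : Matrix (Fin (2*g)) (Fin (2*g)) (ZMod 2)) + (1:ZMod 2) • nil (pv g a + pv g b)) -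
    permMat g (Equiv.swap ⟨a, by omega⟩ ⟨b, by omega⟩) * PsiMat g) k j = 0
  rw [Matrix.sub_apply, one_smul, Matrix.mul_add, Matrix.mul_one, nil, ← Matrix.mul_assoc,
    Matrix.mul_vecMulVec, Matrix.vecMulVec_mul, Matrix.add_apply, Matrix.vecMulVec_apply, psi_pair hg ha hb,
    omega_pair ha hb]
  have hP : (permMat g (Equiv.swap ⟨a, by omega⟩ ⟨b, by omega⟩) * PsiMat g) k j
      = PsiMat g (Equiv.swap ⟨a, by omega⟩ ⟨b, by omega⟩ k) j := by
    rw [Matrix.mul_apply]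
    simp only [permMat, Matrix.of_apply, Equiv.swap_apply_eq_iff, ite_mul, one_mul, zero_mul,
      Finset.sum_ite_eq', Finset.mem_univ, if_true]
  rw [hP]
  by_cases h1 : k = ⟨a, by omega⟩
  · subst h1
    rw [Equiv.swap_apply_left, if_pos rfl, if_neg hab]
    generalize PsiMat g ⟨a, _⟩ j = y
    generalize PsiMat g ⟨b, _⟩ j = z
    revert y z; decide
  · by_cases h2 : k = ⟨b, by omega⟩
    · subst h2
      rw [Equiv.swap_apply_right, if_pos rfl, if_neg (Ne.symm hab)]
      generalize PsiMat g ⟨a, _⟩ j = y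
      generalize PsiMat g ⟨b, _⟩ j = z
      revert y z; decide
    · rw [Equiv.swap_apply_of_ne_of_ne h1 h2, if_neg (fun h => h1 (Fin.ext h)),
        if_neg (fun h => h2 (Fin.ext h))]
      simp

lemma tv_mulVec {a b : ℕ} (ha : a ≤ 2*g) (hb : b ≤ 2*g) (v : Fin (2*g) → ZMod 2) :
    ((tv (pv g a + pv g b) 1 : GL (Fin (2*g)) (ZMod 2)) : Matrix _ _ _) *ᵥ v
      = v + ((PsiMat g *ᵥ v) ⟨a, by omega⟩ + (PsiMat g *ᵥ v) ⟨b, by omega⟩) • (pv g a + pv g b) := by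
  change (1 + (1:ZMod 2) • nil _) *ᵥ v = _
  have : (pv g a + pv g b) ᵥ* OmegaMat g (ZMod 2) =
      PsiMat g ⟨a, by omega⟩ + PsiMat g ⟨b, by omega⟩ := by
    funext l; exact omega_pair ha hb l
  rw [one_smul, Matrix.add_mulVec, Matrix.one_mulVec, nil, Matrix.vecMulVec_mul, Matrix.vecMulVec_mulVec, this,
    add_dotProduct, op_smul_eq_smul]
  rfl

/-- The pair vectors are all in any reflection-stable set containing the first. -/
lemma pairs_mem (hg : 2 ≤ g) (S : Set (Fin (2*g) → ZMod 2)) (h0 : pv g 1 ∈ S)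
    (hr : ∀ a b, a ≤ 2*g → b ≤ 2*g → a ≠ b → ∀ v ∈ S,
      ((tv (pv g a + pv g b) 1 : GL (Fin (2*g)) (ZMod 2)) : Matrix _ _ _) *ᵥ v ∈ S)
    (i j : ℕ) (hi : i ≤ 2*g) (hj : j ≤ 2*g) (hij : i ≠ j) : pv g i + pv g j ∈ S := by
  have mv : ∀ a b c, a ≤ 2*g → b ≤ 2*g → c ≤ 2*g → a ≠ b → a ≠ c → b ≠ c → pv g a + pv g b ∈ S →
      pv g a + pv g c ∈ S := by
    intro a b c ha hb hc hab hac hbc h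
    have := hr b c hb hc hbc _ h
    rw [tv_mulVec hb hc, psi_pair hg ha hb, psi_pair hg ha hb] at this
    simp only [hab.symm, hac.symm, hbc.symm, if_true, if_false, add_zero, zero_add, one_smul] at this
    have e : pv g a + pv g b + (pv g b + pv g c) = pv g a + pv g c := by
      rw [add_assoc, ← add_assoc (pv g b), zmod_add_self, zero_add]
    rwa [e] at this
  have h01 : pv g 0 + pv g 1 ∈ S := by rwa [pv_zero, zero_add]
  have h0j : ∀ j, j ≤ 2*g → 0 ≠ j → pv g 0 + pv g j ∈ S := by
    intro j hj h
    by_cases h1 : j = 1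
    · rwa [h1]
    · exact mv 0 1 j (by omega) (by omega) hj (by omega) h (by omega) h01
  by_cases hi0 : i = 0
  · subst hi0; exact h0j j hj hij
  · by_cases hj0 : j = 0
    · subst hj0; rw [add_comm]; exact h0j i hi (by omega)
    · rw [add_comm]
      refine mv j 0 i hj (by omega) hi hj0 hij.symm (by omega) ?_
      rw [add_comm]; exact h0j j hj (by omega)

lemma single_mem (hg : 2 ≤ g) (U : AddSubmonoid (Fin (2*g) → ZMod 2))
    (hU : ∀ i ≤ 2*g, pv g i ∈ U) (l : Fin (2*g)) : Pi.single l 1 ∈ U := by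
  have key : ∀ m, (h : 2*m+1 < 2*g) → Pi.single (⟨2*m, by omega⟩ : Fin (2*g)) (1:ZMod 2) ∈ U ∧
      Pi.single (⟨2*m+1, by omega⟩ : Fin (2*g)) (1:ZMod 2) ∈ U := by
    intro m
    have odd : ∀ m, (h : 2*m+1 < 2*g) → Pi.single (⟨2*m, by omega⟩ : Fin (2*g)) (1:ZMod 2) ∈ U →
      Pi.single (⟨2*m+1, by omega⟩ : Fin (2*g)) (1:ZMod 2) ∈ U := by
      intro m h h'
      have e := pv_step1 (g := g) m (by omega)
      have : Pi.single (⟨2*m+1, by omega⟩ : Fin (2*g)) (1:ZMod 2)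
          = pv g (2*m+2) + pv g (2*m+1) + Pi.single (⟨2*m, by omega⟩ : Fin (2*g)) (1:ZMod 2) := by
        rw [e]
        refine (h22 (pv g (2*m+1)) (Pi.single (⟨2*m, by omega⟩ : Fin (2*g)) (1:ZMod 2)) _).trans ?_
        abel
      rw [this]
      exact U.add_mem (U.add_mem (hU _ (by omega)) (hU _ (by omega))) h'
    induction m with
    | zero =>
      intro h
      have : Pi.single (⟨2*0, by omega⟩ : Fin (2*g)) (1:ZMod 2) ∈ U := by
        have := hU 1 (by omega)
        rwa [pv_one hg] at this
      exact ⟨this, odd 0 h this⟩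
    | succ m ih =>
      intro h
      have h0 := (ih (by omega)).1
      have : Pi.single (⟨2*(m+1), by omega⟩ : Fin (2*g)) (1:ZMod 2) ∈ U := by
        have e := pv_step2 (g := g) m (by omega)
        have : Pi.single (⟨2*(m+1), by omega⟩ : Fin (2*g)) (1:ZMod 2)
          = pv g (2*m+3) + pv g (2*m+2) + Pi.single (⟨2*m, by omega⟩ : Fin (2*g)) (1:ZMod 2) := by
          rw [e]
          have h3 : (⟨2*(m+1), by omega⟩ : Fin (2*g)) = ⟨2*m+2, by omega⟩ := rfl
          rw [h3]
          refine (h22 (pv g (2*m+2)) (Pi.single (⟨2*m, by omega⟩ : Fin (2*g)) (1:ZMod 2)) _).trans ?_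
          abel
        rw [this]
        exact U.add_mem (U.add_mem (hU _ (by omega)) (hU _ (by omega))) h0
      exact ⟨this, odd (m+1) h this⟩
  have hl := l.2
  have := key ((l:ℕ)/2) (by omega)
  by_cases h : (l:ℕ) % 2 = 0
  · convert this.1 using 2; apply Fin.ext; simp only; omega
  · convert this.2 using 2; apply Fin.ext; simp only; omega

/-- Every symmetric matrix is a sum of squares of pair vectors. -/
lemma symm_mem (hg : 2 ≤ g) (L : AddSubmonoid (Matrix (Fin (2*g)) (Fin (2*g)) (ZMod 2)))
    (hL : ∀ i j, i ≤ 2*g → j ≤ 2*g → i ≠ j →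
      Matrix.vecMulVec (pv g i + pv g j) (pv g i + pv g j) ∈ L)
    (C : Matrix (Fin (2*g)) (Fin (2*g)) (ZMod 2)) (hC : Cᵀ = C) : C ∈ L := by
  have sq : ∀ i ≤ 2*g, Matrix.vecMulVec (pv g i) (pv g i) ∈ L := by
    intro i hi
    by_cases h : i = 0
    · subst h; rw [pv_zero]; simp
    · have := hL i 0 hi (by omega) h
      rwa [pv_zero, add_zero] at this
  have pol : ∀ i ≤ 2*g, ∀ j ≤ 2*g,
      Matrix.vecMulVec (pv g i) (pv g j) + Matrix.vecMulVec (pv g j) (pv g i) ∈ L := by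
    intro i hi j hj
    by_cases h : i = j
    · subst h; exact L.add_mem (sq i hi) (sq i hi)
    · have := L.add_mem (hL i j hi hj h) (L.add_mem (sq i hi) (sq j hj))
      convert this using 1
      rw [Matrix.add_vecMulVec, Matrix.vecMulVec_add, Matrix.vecMulVec_add]
      refine (h22 (Matrix.vecMulVec (pv g i) (pv g i)) (Matrix.vecMulVec (pv g j) (pv g j)) _).trans ?_
      abel
  have pol2 : ∀ i ≤ 2*g, ∀ m : Fin (2*g),
      Matrix.vecMulVec (pv g i) (Pi.single m 1) + Matrix.vecMulVec (Pi.single m 1) (pv g i) ∈ L := by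
    intro i hi m
    refine single_mem hg (U := 
      { carrier := {x | Matrix.vecMulVec (pv g i) x + Matrix.vecMulVec x (pv g i) ∈ L}
        zero_mem' := by simp
        add_mem' := ?_ }) (pol i hi) m
    intro a b ha hb
    simp only [Set.mem_ofPred_eq] at *
    rw [Matrix.add_vecMulVec, Matrix.vecMulVec_add, add_add_add_comm]
    exact L.add_mem ha hb
  have pol3 : ∀ l m : Fin (2*g), Matrix.vecMulVec (Pi.single l 1) (Pi.single m 1) +
      Matrix.vecMulVec (Pi.single m 1) (Pi.single l 1) ∈ L := by
    intro l m
    refine single_mem hg (U := 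
      { carrier := {x | Matrix.vecMulVec x (Pi.single m 1) + Matrix.vecMulVec (Pi.single m 1) x ∈ L}
        zero_mem' := by simp
        add_mem' := ?_ }) (fun i hi => pol2 i hi m) l
    intro a b ha hb
    simp only [Set.mem_ofPred_eq] at *
    rw [Matrix.add_vecMulVec, Matrix.vecMulVec_add, add_add_add_comm]
    exact L.add_mem ha hb
  have pol4 : ∀ i ≤ 2*g, ∀ x, Matrix.vecMulVec (pv g i) x + Matrix.vecMulVec x (pv g i) ∈ L := by
    intro i hi x
    have hx : x = ∑ l, x l • Pi.single l 1 := by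
      funext k; simp [Finset.sum_apply, Pi.single_apply]
    have hz : ∀ c : ZMod 2, c = 0 ∨ c = 1 := by decide
    let U : AddSubmonoid (Fin (2*g) → ZMod 2) :=
      { carrier := {x | Matrix.vecMulVec (pv g i) x + Matrix.vecMulVec x (pv g i) ∈ L}
        zero_mem' := by simp
        add_mem' := by
          intro a b ha hb
          simp only [Set.mem_ofPred_eq] at *
          rw [Matrix.add_vecMulVec, Matrix.vecMulVec_add, add_add_add_comm]
          exact L.add_mem ha hb }
    change x ∈ U
    rw [hx]
    refine U.sum_mem fun l _ => ?_
    rcases hz (x l) with h | h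
    · rw [h, zero_smul]; exact U.zero_mem
    · rw [h, one_smul]; exact pol2 i hi l
  have sq2 : ∀ m : Fin (2*g), Matrix.vecMulVec (Pi.single m 1) (Pi.single m 1) ∈ L := by
    intro m
    have := single_mem hg (U := AddSubmonoid.closure {x | ∃ i ≤ 2*g, x = pv g i})
      (fun i hi => AddSubmonoid.subset_closure ⟨i, hi, rfl⟩) m
    generalize (Pi.single m 1 : Fin (2*g) → ZMod 2) = w at this ⊢
    induction this using AddSubmonoid.closure_induction_left with
    | zero => simp
    | add_left x hx y hy ih =>
      obtain ⟨i, hi, rfl⟩ := hx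
      have := L.add_mem (L.add_mem (sq i hi) ih) (pol4 i hi y)
      convert this using 1
      rw [Matrix.add_vecMulVec, Matrix.vecMulVec_add, Matrix.vecMulVec_add]
      abel
  have hz : ∀ c : ZMod 2, c = 0 ∨ c = 1 := by decide
  have diag : ∀ M : Matrix (Fin (2*g)) (Fin (2*g)) (ZMod 2), Matrix.diagonal (Matrix.diag M) ∈ L := by
    intro M
    have : Matrix.diagonal (Matrix.diag M)
        = ∑ i, M i i • Matrix.vecMulVec (Pi.single i (1:ZMod 2)) (Pi.single i 1) := by
      ext a b
      rw [Matrix.sum_apply]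
      by_cases h : a = b
      · subst h
        simp [Matrix.vecMulVec_apply, Pi.single_apply]
      · simp only [Matrix.smul_apply, Matrix.vecMulVec_apply, Pi.single_apply, Matrix.diagonal_apply_ne _ h]
        symm
        refine Finset.sum_eq_zero fun i _ => ?_
        by_cases h1 : a = i
        · subst h1; simp [Ne.symm h]
        · simp [h1]
    rw [this]
    refine L.sum_mem fun i _ => ?_
    rcases hz (M i i) with h | h
    · rw [h, zero_smul]; exact L.zero_mem
    · rw [h, one_smul]; exact sq2 i
  have off : ∀ M : Matrix (Fin (2*g)) (Fin (2*g)) (ZMod 2), M + Mᵀ ∈ L := by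
    intro M
    have : M + Mᵀ = ∑ i, ∑ j, M i j • (Matrix.vecMulVec (Pi.single i (1:ZMod 2)) (Pi.single j 1)
        + Matrix.vecMulVec (Pi.single j (1:ZMod 2)) (Pi.single i 1)) := by
      ext a b
      simp [Matrix.sum_apply, Matrix.vecMulVec_apply, Pi.single_apply, Finset.sum_add_distrib]
    rw [this]
    refine L.sum_mem fun i _ => L.sum_mem fun j _ => ?_
    rcases hz (M i j) with h | h
    · rw [h, zero_smul]; exact L.zero_mem
    · rw [h, one_smul]; exact pol3 i j
  have : C = Matrix.diagonal (Matrix.diag C) +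
      ((Matrix.of fun i j => if i < j then C i j else 0) + (Matrix.of fun i j => if i < j then C i j else 0)ᵀ) := by
    ext i j
    have hs : C j i = C i j := congrFun (congrFun hC i) j
    simp only [Matrix.add_apply, Matrix.of_apply, Matrix.transpose_apply, Matrix.diagonal_apply, Matrix.diag_apply]
    rcases lt_trichotomy i j with h | h | h
    · simp [h, h.ne, h.not_gt]
    · subst h; simp
    · simp [h, h.ne', h.not_gt, hs]
  rw [this]
  exact L.add_mem (diag C) (off _)

/-! 2-adic part -/

/-- entrywise reduction as ring hom -/
noncomputable def rho (g : ℕ) : Matrix (Fin (2*g)) (Fin (2*g)) ℤ_[2] →+* Matrix (Fin (2*g)) (Fin (2*g)) (ZMod 2) :=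
  (PadicInt.toZMod (p := 2)).mapMatrix

lemma rho_apply (M : Matrix (Fin (2*g)) (Fin (2*g)) ℤ_[2]) (i j) : rho g M i j = PadicInt.toZMod (M i j) := rfl

lemma coe_red (x : GL (Fin (2*g)) ℤ_[2]) :
    ((redMod2 g x : GL (Fin (2*g)) (ZMod 2)) : Matrix (Fin (2*g)) (Fin (2*g)) (ZMod 2)) = rho g x := rfl

lemma rho_omega : rho g (OmegaMat g ℤ_[2]) = OmegaMat g (ZMod 2) := by
  ext i j
  rw [rho_apply, omega_apply, omega_apply]
  simp only [sg]
  split_ifs <;> simp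

lemma rho_transpose (M : Matrix (Fin (2*g)) (Fin (2*g)) ℤ_[2]) : rho g Mᵀ = (rho g M)ᵀ := rfl

lemma rho_smul (c : ℤ_[2]) (M : Matrix (Fin (2*g)) (Fin (2*g)) ℤ_[2]) :
    rho g (c • M) = PadicInt.toZMod c • rho g M := by
  ext i j
  simp [rho_apply]

lemma toZMod_two : PadicInt.toZMod (2 : ℤ_[2]) = (0 : ZMod 2) := by
  rw [map_ofNat]; decide

lemma toZMod_eq_zero (x : ℤ_[2]) (h : PadicInt.toZMod x = (0 : ZMod 2)) : ∃ y, x = 2 * y := by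
  have : x ∈ RingHom.ker (PadicInt.toZMod (p := 2)) := h
  rw [PadicInt.ker_toZMod, PadicInt.maximalIdeal_eq_span_p, Ideal.mem_span_singleton] at this
  exact this

lemma rho_eq_zero (M : Matrix (Fin (2*g)) (Fin (2*g)) ℤ_[2]) (h : rho g M = 0) :
    ∃ N : Matrix (Fin (2*g)) (Fin (2*g)) ℤ_[2], M = (2 : ℤ_[2]) • N := by
  have : ∀ i j, ∃ y, M i j = 2 * y := fun i j => toZMod_eq_zero _ (congrFun (congrFun h i) j)
  choose N hN using this
  exact ⟨Matrix.of N, by ext i j; simp [hN]⟩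

lemma rho_dd : rho g (dd g ℤ_[2] : Matrix _ _ _) = 1 := by
  change rho g (Matrix.diagonal _) = 1
  ext i j
  rw [rho_apply]
  by_cases h : i = j
  · subst h
    simp only [Matrix.diagonal_apply_eq, Matrix.one_apply_eq, sg]
    split_ifs <;> simp
  · simp [h]

lemma rho_nil (j : Fin (2*g)) : rho g (nil (Pi.single j 1)) = nil (Pi.single j 1) := by
  rw [nil, nil, map_mul, rho_omega]
  congr 1
  ext a b
  rw [rho_apply]
  simp only [Matrix.vecMulVec_apply, Pi.single_apply]
  split_ifs <;> simp

/-- `Sp` as a subgroup. -/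
def spG (g : ℕ) (R : Type) [CommRing R] : Subgroup (GL (Fin (2*g)) R) where
  carrier := SpSet g R
  one_mem' := by simp [SpSet]
  mul_mem' := by
    intro a b ha hb
    change _ = _ at ha
    change _ = _ at hb
    change _ = _
    rw [Units.val_mul, Matrix.transpose_mul]
    calc _ = (b : Matrix (Fin (2*g)) (Fin (2*g)) R)ᵀ * ((a : Matrix (Fin (2*g)) (Fin (2*g)) R)ᵀ * OmegaMat g R * a) * b := by
          simp only [Matrix.mul_assoc]
      _ = _ := by rw [ha, hb]
  inv_mem' := by
    intro a ha
    change _ = _ at ha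
    change _ = _
    have h1 : (a : Matrix (Fin (2*g)) (Fin (2*g)) R) * ((a⁻¹ : GL (Fin (2*g)) R) : Matrix (Fin (2*g)) (Fin (2*g)) R) = 1 := by
      rw [← Units.val_mul, mul_inv_cancel, Units.val_one]
    have h2 : ((a⁻¹ : GL (Fin (2*g)) R) : Matrix (Fin (2*g)) (Fin (2*g)) R)ᵀ * (a : Matrix (Fin (2*g)) (Fin (2*g)) R)ᵀ = 1 := by
      rw [← Matrix.transpose_mul, h1, Matrix.transpose_one]
    conv_lhs => rw [← ha]
    calc _ = (((a⁻¹ : GL (Fin (2*g)) R) : Matrix (Fin (2*g)) (Fin (2*g)) R)ᵀ * (a : Matrix (Fin (2*g)) (Fin (2*g)) R)ᵀ) * OmegaMat g R *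
          ((a : Matrix (Fin (2*g)) (Fin (2*g)) R) * ((a⁻¹ : GL (Fin (2*g)) R) : Matrix (Fin (2*g)) (Fin (2*g)) R)) := by simp only [Matrix.mul_assoc]
      _ = _ := by rw [h1, h2, Matrix.one_mul, Matrix.mul_one]

lemma mem_spG (x : GL (Fin (2*g)) R) : x ∈ spG g R ↔
    (x : Matrix (Fin (2*g)) (Fin (2*g)) R)ᵀ * OmegaMat g R * x = OmegaMat g R := Iff.rfl

lemma gsp_mul {a b : GL (Fin (2*g)) R} {m n : R}
    (ha : (a : Matrix (Fin (2*g)) (Fin (2*g)) R)ᵀ * OmegaMat g R * a = m • OmegaMat g R)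
    (hb : (b : Matrix (Fin (2*g)) (Fin (2*g)) R)ᵀ * OmegaMat g R * b = n • OmegaMat g R) :
    ((a * b : GL (Fin (2*g)) R) : Matrix (Fin (2*g)) (Fin (2*g)) R)ᵀ * OmegaMat g R * ((a * b : GL (Fin (2*g)) R) : Matrix (Fin (2*g)) (Fin (2*g)) R)
      = (m * n) • OmegaMat g R := by
  rw [Units.val_mul, Matrix.transpose_mul]
  calc _ = (b : Matrix (Fin (2*g)) (Fin (2*g)) R)ᵀ * ((a : Matrix (Fin (2*g)) (Fin (2*g)) R)ᵀ * OmegaMat g R * a) * b := by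
          simp only [Matrix.mul_assoc]
    _ = _ := by rw [ha, Matrix.mul_smul, Matrix.smul_mul, hb, smul_smul]

lemma gsp_inv {a : GL (Fin (2*g)) R} {m : Rˣ}
    (ha : (a : Matrix (Fin (2*g)) (Fin (2*g)) R)ᵀ * OmegaMat g R * a = (m : R) • OmegaMat g R) :
    ((a⁻¹ : GL (Fin (2*g)) R) : Matrix (Fin (2*g)) (Fin (2*g)) R)ᵀ * OmegaMat g R * ((a⁻¹ : GL (Fin (2*g)) R) : Matrix (Fin (2*g)) (Fin (2*g)) R)
      = ((m⁻¹ : Rˣ) : R) • OmegaMat g R := by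
  have h1 : (a : Matrix (Fin (2*g)) (Fin (2*g)) R) * ((a⁻¹ : GL (Fin (2*g)) R) : Matrix (Fin (2*g)) (Fin (2*g)) R) = 1 := by
    rw [← Units.val_mul, mul_inv_cancel, Units.val_one]
  have h2 : ((a⁻¹ : GL (Fin (2*g)) R) : Matrix (Fin (2*g)) (Fin (2*g)) R)ᵀ * (a : Matrix (Fin (2*g)) (Fin (2*g)) R)ᵀ = 1 := by
    rw [← Matrix.transpose_mul, h1, Matrix.transpose_one]
  have h3 : OmegaMat g R = ((m⁻¹ : Rˣ) : R) • ((a : Matrix (Fin (2*g)) (Fin (2*g)) R)ᵀ * OmegaMat g R * a) := by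
    rw [ha, smul_smul, Units.inv_mul, one_smul]
  conv_lhs => rw [h3]
  rw [Matrix.mul_smul, Matrix.smul_mul]
  congr 1
  calc _ = (((a⁻¹ : GL (Fin (2*g)) R) : Matrix (Fin (2*g)) (Fin (2*g)) R)ᵀ * (a : Matrix (Fin (2*g)) (Fin (2*g)) R)ᵀ) * OmegaMat g R *
          ((a : Matrix (Fin (2*g)) (Fin (2*g)) R) * ((a⁻¹ : GL (Fin (2*g)) R) : Matrix (Fin (2*g)) (Fin (2*g)) R)) := by simp only [Matrix.mul_assoc]
      _ = _ := by rw [h1, h2, Matrix.one_mul, Matrix.mul_one]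

lemma comm_le_sp (H : Subgroup (GL (Fin (2*g)) R)) (hGSp : (H : Set (GL (Fin (2*g)) R)) ⊆ GSpSet g R) :
    ⁅H, H⁆ ≤ spG g R := by
  rw [Subgroup.commutator_le]
  intro a ha b hb
  obtain ⟨m, hm⟩ := hGSp ha
  obtain ⟨n, hn⟩ := hGSp hb
  have := gsp_mul (gsp_mul (gsp_mul hm hn) (gsp_inv hm)) (gsp_inv hn)
  rw [mem_spG, commutatorElement_def, this]
  have e : (m : R) * n * ((m⁻¹ : Rˣ) : R) * ((n⁻¹ : Rˣ) : R) = 1 := by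
    norm_cast
    simp [mul_comm m n]
  rw [e, one_smul]

lemma red_sp (H : Subgroup (GL (Fin (2*g)) ℤ_[2]))
    (hGSp : (H : Set (GL (Fin (2*g)) ℤ_[2])) ⊆ GSpSet g ℤ_[2]) (h : GL (Fin (2*g)) ℤ_[2]) (hh : h ∈ H) :
    (rho g h)ᵀ * OmegaMat g (ZMod 2) * rho g h = OmegaMat g (ZMod 2) := by
  obtain ⟨m, hm⟩ := hGSp hh
  have := congrArg (rho g) hm
  rw [map_mul, map_mul, rho_transpose, rho_smul, rho_omega] at this
  have h1 : IsUnit (PadicInt.toZMod (m : ℤ_[2])) := m.isUnit.map _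
  have h2 : ∀ c : ZMod 2, IsUnit c → c = 1 := by decide
  rw [this, h2 _ h1, one_smul]

/-- graded piece of the commutator subgroup -/
def LL (H : Subgroup (GL (Fin (2*g)) ℤ_[2])) (k : ℕ) :
    AddSubmonoid (Matrix (Fin (2*g)) (Fin (2*g)) (ZMod 2)) where
  carrier := {C | ∃ y ∈ ⁅H, H⁆, ∃ Y : Matrix (Fin (2*g)) (Fin (2*g)) ℤ_[2],
    (y : Matrix (Fin (2*g)) (Fin (2*g)) ℤ_[2]) = 1 + (2:ℤ_[2])^(k+1) • Y ∧ rho g Y = C * OmegaMat g (ZMod 2)}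
  zero_mem' := ⟨1, Subgroup.one_mem _, 0, by simp, by simp⟩
  add_mem' := by
    rintro C D ⟨y, hy, Y, e, f⟩ ⟨z, hz, Z, e', f'⟩
    refine ⟨y * z, Subgroup.mul_mem _ hy hz, Y + Z + (2:ℤ_[2])^(k+1) • (Y * Z), ?_, ?_⟩
    · rw [Units.val_mul, e, e']
      simp only [add_mul, mul_add, one_mul, mul_one, Matrix.smul_mul, Matrix.mul_smul, smul_add]
      abel
    · rw [map_add, map_add, rho_smul, map_pow, toZMod_two, f, f', add_mul]
      simp

lemma LL_conj (H : Subgroup (GL (Fin (2*g)) ℤ_[2]))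
    (hGSp : (H : Set (GL (Fin (2*g)) ℤ_[2])) ⊆ GSpSet g ℤ_[2]) (k : ℕ)
    (B : GL (Fin (2*g)) (ZMod 2)) (hB : B ∈ Subgroup.map (redMod2 g) H)
    (C) (hC : C ∈ LL H k) : (B : Matrix _ _ _) * C * (B : Matrix _ _ _)ᵀ ∈ LL H k := by
  obtain ⟨h, hh, rfl⟩ := hB
  obtain ⟨y, hy, Y, e, f⟩ := hC
  have hyH : y ∈ H := Subgroup.commutator_le_self H hy
  have h1 : (h : Matrix (Fin (2*g)) (Fin (2*g)) ℤ_[2]) * ((h⁻¹ : GL (Fin (2*g)) ℤ_[2]) : Matrix (Fin (2*g)) (Fin (2*g)) ℤ_[2]) = 1 := by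
    rw [← Units.val_mul, mul_inv_cancel, Units.val_one]
  refine ⟨h * y * h⁻¹, ?_, (h : Matrix (Fin (2*g)) (Fin (2*g)) ℤ_[2]) * Y * ((h⁻¹ : GL (Fin (2*g)) ℤ_[2]) : Matrix (Fin (2*g)) (Fin (2*g)) ℤ_[2]), ?_, ?_⟩
  · have : h * y * h⁻¹ = (h * y * h⁻¹ * y⁻¹) * y := by simp
    rw [this]
    exact Subgroup.mul_mem _ (Subgroup.commutator_mem_commutator hh hyH) hy
  · rw [Units.val_mul, Units.val_mul, e, mul_add, add_mul, mul_one, h1, Matrix.mul_smul, Matrix.smul_mul]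
  · rw [map_mul, map_mul, f, coe_red]
    have h3 := red_sp H hGSp h hh
    have h2 : rho g h * rho g ((h⁻¹ : GL (Fin (2*g)) ℤ_[2]) : Matrix (Fin (2*g)) (Fin (2*g)) ℤ_[2]) = 1 := by
      rw [← map_mul, h1, map_one]
    have h4 : OmegaMat g (ZMod 2) * rho g ((h⁻¹ : GL (Fin (2*g)) ℤ_[2]) : Matrix (Fin (2*g)) (Fin (2*g)) ℤ_[2])
        = (rho g h)ᵀ * OmegaMat g (ZMod 2) := by
      conv_lhs => rw [← h3]
      rw [mul_assoc, h2, mul_one]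
    simp only [mul_assoc] at h4 ⊢
    rw [h4]


lemma sp_gsp {x : GL (Fin (2*g)) R} (h : x ∈ SpSet g R) : x ∈ GSpSet g R :=
  ⟨1, by rw [Units.val_one, one_smul]; exact h⟩

lemma LL_base (hg : 2 ≤ g)
    (H : Subgroup (GL (Fin (2*g)) ℤ_[2]))
    (hpre : ∀ x : GL (Fin (2*g)) ℤ_[2], x ∈ GSpSet g ℤ_[2] →
      redMod2 g x ∈ Subgroup.map (redMod2 g) H → x ∈ H)
    (hS : ∀ a b, a ≤ 2*g → b ≤ 2*g → a ≠ b →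
      (tv (pv g a + pv g b) 1 : GL (Fin (2*g)) (ZMod 2)) ∈ Subgroup.map (redMod2 g) H)
    (k : ℕ) : Matrix.vecMulVec (pv g 1) (pv g 1) ∈ LL H k := by
  have hd : dd g ℤ_[2] ∈ H := by
    apply hpre _ dd_mem
    have : redMod2 g (dd g ℤ_[2]) = 1 := Units.ext (by rw [coe_red, rho_dd, Units.val_one])
    rw [this]; exact Subgroup.one_mem _
  let j : Fin (2*g) := ⟨0, by omega⟩
  have ht : tv (Pi.single j 1) ((2:ℤ_[2])^k) ∈ H := by
    apply hpre _ (sp_gsp (tv_mem _ _))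
    have e : rho g (tv (Pi.single j 1) ((2:ℤ_[2])^k) : Matrix _ _ _) = 1 + (0:ZMod 2)^k • nil (Pi.single j 1) := by
      change rho g (1 + (2:ℤ_[2])^k • nil (Pi.single j 1)) = _
      rw [map_add, map_one, rho_smul, rho_nil, map_pow, toZMod_two]
    by_cases hk : k = 0
    · have : redMod2 g (tv (Pi.single j 1) ((2:ℤ_[2])^k)) = tv (pv g 0 + pv g 1) 1 := by
        apply Units.ext
        rw [coe_red, e, hk, pow_zero, pv_zero, zero_add, pv_one hg]
        rfl
      rw [this]
      exact hS 0 1 (by omega) (by omega) (by omega)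
    · have : redMod2 g (tv (Pi.single j 1) ((2:ℤ_[2])^k)) = 1 := by
        apply Units.ext
        rw [coe_red, e, zero_pow hk]
        simp
      rw [this]; exact Subgroup.one_mem _
  refine ⟨_, Subgroup.commutator_mem_commutator hd ht, - nil (Pi.single j 1), ?_, ?_⟩
  · rw [commutatorElement_def, comm_eq j rfl, pow_succ, mul_comm (2:ℤ_[2])]
  · rw [map_neg, rho_nil, nil, pv_one hg]
    ext a b
    rw [Matrix.neg_apply]
    exact ZMod.neg_eq_self_mod_two _

lemma LL_top (hg : 2 ≤ g)
    (H : Subgroup (GL (Fin (2*g)) ℤ_[2]))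
    (hGSp : (H : Set (GL (Fin (2*g)) ℤ_[2])) ⊆ GSpSet g ℤ_[2])
    (hpre : ∀ x : GL (Fin (2*g)) ℤ_[2], x ∈ GSpSet g ℤ_[2] →
      redMod2 g x ∈ Subgroup.map (redMod2 g) H → x ∈ H)
    (hS : ∀ a b, a ≤ 2*g → b ≤ 2*g → a ≠ b →
      (tv (pv g a + pv g b) 1 : GL (Fin (2*g)) (ZMod 2)) ∈ Subgroup.map (redMod2 g) H)
    (k : ℕ) (C : Matrix (Fin (2*g)) (Fin (2*g)) (ZMod 2)) (hC : Cᵀ = C) : C ∈ LL H k := by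
  refine symm_mem hg (LL H k) ?_ C hC
  refine pairs_mem hg {v | Matrix.vecMulVec v v ∈ LL H k} (LL_base hg H hpre hS k) ?_
  intro a b ha hb hab v hv
  have := LL_conj H hGSp k _ (hS a b ha hb hab) _ hv
  rwa [Matrix.mul_vecMulVec, Matrix.vecMulVec_mul, Matrix.vecMul_transpose] at this

lemma step (hg : 2 ≤ g)
    (H : Subgroup (GL (Fin (2*g)) ℤ_[2]))
    (hGSp : (H : Set (GL (Fin (2*g)) ℤ_[2])) ⊆ GSpSet g ℤ_[2])
    (hpre : ∀ x : GL (Fin (2*g)) ℤ_[2], x ∈ GSpSet g ℤ_[2] →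
      redMod2 g x ∈ Subgroup.map (redMod2 g) H → x ∈ H)
    (hS : ∀ a b, a ≤ 2*g → b ≤ 2*g → a ≠ b →
      (tv (pv g a + pv g b) 1 : GL (Fin (2*g)) (ZMod 2)) ∈ Subgroup.map (redMod2 g) H)
    (k : ℕ) (x : GL (Fin (2*g)) ℤ_[2]) (hx : x ∈ spG g ℤ_[2]) (A : Matrix (Fin (2*g)) (Fin (2*g)) ℤ_[2])
    (hA : (x : Matrix (Fin (2*g)) (Fin (2*g)) ℤ_[2]) = 1 + (2:ℤ_[2])^(k+1) • A) :
    ∃ y ∈ ⁅H, H⁆, ∃ A' : Matrix (Fin (2*g)) (Fin (2*g)) ℤ_[2],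
      ((y⁻¹ * x : GL (Fin (2*g)) ℤ_[2]) : Matrix (Fin (2*g)) (Fin (2*g)) ℤ_[2]) = 1 + (2:ℤ_[2])^(k+2) • A' := by
  have h1 : Aᵀ * OmegaMat g ℤ_[2] + OmegaMat g ℤ_[2] * A + (2:ℤ_[2])^(k+1) • (Aᵀ * OmegaMat g ℤ_[2] * A) = 0 := by
    rw [mem_spG, hA, Matrix.transpose_add, Matrix.transpose_smul, Matrix.transpose_one] at hx
    have h2 : (2:ℤ_[2])^(k+1) • (Aᵀ * OmegaMat g ℤ_[2] + OmegaMat g ℤ_[2] * A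
        + (2:ℤ_[2])^(k+1) • (Aᵀ * OmegaMat g ℤ_[2] * A)) = 0 := by
      simp only [add_mul, mul_add, one_mul, mul_one, Matrix.smul_mul, Matrix.mul_smul] at hx
      simp only [smul_add]
      rw [← sub_eq_zero] at hx
      rw [← hx]; abel
    ext i j
    have h3 := congrFun (congrFun h2 i) j
    rw [Matrix.smul_apply, smul_eq_mul, Matrix.zero_apply] at h3
    rcases mul_eq_zero.1 h3 with h4 | h4
    · exact absurd h4 (pow_ne_zero _ two_ne_zero)
    · exact h4
  have h2 : (rho g A)ᵀ * OmegaMat g (ZMod 2) + OmegaMat g (ZMod 2) * rho g A = 0 := by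
    have := congrArg (rho g) h1
    rw [map_add, map_add, map_mul, map_mul, rho_smul, map_pow, toZMod_two, rho_omega, rho_transpose] at this
    simpa using this
  have neg2 : ∀ M : Matrix (Fin (2*g)) (Fin (2*g)) (ZMod 2), -M = M := fun M => by
    ext a b; exact ZMod.neg_eq_self_mod_two _
  have hO2 : OmegaMat g (ZMod 2) * OmegaMat g (ZMod 2) = 1 := by rw [omega_sq, neg2]
  have h3 : (rho g A)ᵀ * OmegaMat g (ZMod 2) = OmegaMat g (ZMod 2) * rho g A := by
    rw [add_eq_zero_iff_eq_neg, neg2] at h2; exact h2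
  obtain ⟨y, hy, Y, e, f⟩ := LL_top hg H hGSp hpre hS k (rho g A * OmegaMat g (ZMod 2)) (by
    rw [Matrix.transpose_mul, omega_transpose, neg2]
    calc OmegaMat g (ZMod 2) * (rho g A)ᵀ
        = OmegaMat g (ZMod 2) * ((rho g A)ᵀ * OmegaMat g (ZMod 2)) * OmegaMat g (ZMod 2) := by
          rw [mul_assoc, mul_assoc, hO2, mul_one]
      _ = _ := by rw [h3, ← mul_assoc, hO2, one_mul])
  rw [mul_assoc, hO2, mul_one] at f
  obtain ⟨N, hN⟩ := rho_eq_zero (A - Y) (by rw [map_sub, f, sub_self])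
  refine ⟨y, hy, ((y⁻¹ : GL (Fin (2*g)) ℤ_[2]) : Matrix (Fin (2*g)) (Fin (2*g)) ℤ_[2]) * N, ?_⟩
  have h4 : ((y⁻¹ : GL (Fin (2*g)) ℤ_[2]) : Matrix (Fin (2*g)) (Fin (2*g)) ℤ_[2]) * (y : Matrix (Fin (2*g)) (Fin (2*g)) ℤ_[2]) = 1 := by
    rw [← Units.val_mul, inv_mul_cancel, Units.val_one]
  have h5 : (x : Matrix (Fin (2*g)) (Fin (2*g)) ℤ_[2]) = y + (2:ℤ_[2])^(k+2) • N := by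
    have : A = Y + (2:ℤ_[2]) • N := by rw [← hN]; abel
    rw [hA, e, this, smul_add, smul_smul, ← pow_succ, ← add_assoc]
  rw [Units.val_mul, h5, mul_add, h4, Matrix.mul_smul]

lemma approx (hg : 2 ≤ g)
    (H : Subgroup (GL (Fin (2*g)) ℤ_[2]))
    (hGSp : (H : Set (GL (Fin (2*g)) ℤ_[2])) ⊆ GSpSet g ℤ_[2])
    (hpre : ∀ x : GL (Fin (2*g)) ℤ_[2], x ∈ GSpSet g ℤ_[2] →
      redMod2 g x ∈ Subgroup.map (redMod2 g) H → x ∈ H)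
    (hS : ∀ a b, a ≤ 2*g → b ≤ 2*g → a ≠ b →
      (tv (pv g a + pv g b) 1 : GL (Fin (2*g)) (ZMod 2)) ∈ Subgroup.map (redMod2 g) H)
    (k : ℕ) (x : GL (Fin (2*g)) ℤ_[2]) (hx : x ∈ spG g ℤ_[2])
    (hr : redMod2 g x ∈ ⁅Subgroup.map (redMod2 g) H, Subgroup.map (redMod2 g) H⁆) :
    ∃ y ∈ ⁅H, H⁆, ∃ A' : Matrix (Fin (2*g)) (Fin (2*g)) ℤ_[2],
      ((y⁻¹ * x : GL (Fin (2*g)) ℤ_[2]) : Matrix (Fin (2*g)) (Fin (2*g)) ℤ_[2]) = 1 + (2:ℤ_[2])^(k+1) • A' := by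
  induction k with
  | zero =>
    rw [← Subgroup.map_commutator] at hr
    obtain ⟨y, hy, e⟩ := hr
    have h1 : redMod2 g (y⁻¹ * x) = 1 := by rw [map_mul, map_inv, e, inv_mul_cancel]
    have h2 := congrArg (fun z : GL (Fin (2*g)) (ZMod 2) => (z : Matrix (Fin (2*g)) (Fin (2*g)) (ZMod 2))) h1
    simp only [coe_red, Units.val_one] at h2
    obtain ⟨N, hN⟩ := rho_eq_zero (((y⁻¹ * x : GL (Fin (2*g)) ℤ_[2]) : Matrix (Fin (2*g)) (Fin (2*g)) ℤ_[2]) - 1)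
      (by rw [map_sub, h2, map_one, sub_self])
    refine ⟨y, hy, N, ?_⟩
    rw [zero_add, pow_one, ← hN]; abel
  | succ k ih =>
    obtain ⟨y, hy, A, hA⟩ := ih
    have hz : y⁻¹ * x ∈ spG g ℤ_[2] := Subgroup.mul_mem _ (Subgroup.inv_mem _ (comm_le_sp H hGSp hy)) hx
    obtain ⟨z, hz, B, hB⟩ := step hg H hGSp hpre hS k _ hz A hA
    refine ⟨y * z, Subgroup.mul_mem _ hy hz, B, ?_⟩
    rw [_root_.mul_inv_rev, mul_assoc]; exact hB


lemma tendsto_small (A : ℕ → Matrix (Fin (2*g)) (Fin (2*g)) ℤ_[2]) :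
    Filter.Tendsto (fun k => 1 + (2:ℤ_[2])^(k+1) • A k) Filter.atTop (nhds 1) := by
  have : Filter.Tendsto (fun k => (2:ℤ_[2])^(k+1) • A k) Filter.atTop (nhds 0) := by
    refine tendsto_pi_nhds.2 fun i => tendsto_pi_nhds.2 fun j => ?_
    refine squeeze_zero_norm (a := fun k : ℕ => (1/2:ℝ)^(k+1)) ?_ ?_
    · intro k
      rw [Matrix.smul_apply, smul_eq_mul, norm_mul, norm_pow]
      have h2 : ‖(2:ℤ_[2])‖ = 1/2 := by
        have := PadicInt.norm_p (p := 2)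
        simpa using this
      rw [h2]
      exact mul_le_of_le_one_right (by positivity) (PadicInt.norm_le_one _)
    · exact (tendsto_pow_atTop_nhds_zero_of_lt_one (by norm_num) (by norm_num)).comp (Filter.tendsto_add_atTop_nat 1)
  simpa using tendsto_const_nhds.add this

lemma tendsto_units (z : ℕ → GL (Fin (2*g)) ℤ_[2]) (A : ℕ → Matrix (Fin (2*g)) (Fin (2*g)) ℤ_[2])
    (h : ∀ k, (z k : Matrix (Fin (2*g)) (Fin (2*g)) ℤ_[2]) = 1 + (2:ℤ_[2])^(k+1) • A k) :
    Filter.Tendsto z Filter.atTop (nhds 1) := by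
  rw [Units.isInducing_embedProduct.tendsto_nhds_iff]
  rw [map_one, Prod.one_eq_mk, nhds_prod_eq]
  refine Filter.Tendsto.prodMk ?_ ?_
  · convert tendsto_small A using 2 with k
    exact h k
  · refine (MulOpposite.continuous_op.tendsto 1).comp ?_
    convert tendsto_small (fun k => - (A k * ((z k)⁻¹ : GL (Fin (2*g)) ℤ_[2]).val)) using 2 with k
    have h1 : (z k : Matrix (Fin (2*g)) (Fin (2*g)) ℤ_[2]) * ((z k)⁻¹ : GL (Fin (2*g)) ℤ_[2]).val = 1 := by
      rw [← Units.val_mul, mul_inv_cancel, Units.val_one]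
    rw [h k, add_mul, one_mul, Matrix.smul_mul] at h1
    rw [smul_neg, ← h1]
    abel

lemma closed_pre (P : Subgroup (GL (Fin (2*g)) (ZMod 2))) :
    IsClosed ((P.comap (redMod2 g) : Subgroup _) : Set (GL (Fin (2*g)) ℤ_[2])) := by
  refine Subgroup.isClosed_of_isOpen _ (Subgroup.isOpen_of_mem_nhds _ (g := 1) ?_)
  have hopen : IsOpen {x : GL (Fin (2*g)) ℤ_[2] | ∀ i j, ‖((x : Matrix (Fin (2*g)) (Fin (2*g)) ℤ_[2]) - 1) i j‖ < 1} := by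
    simp only [Set.ofPred_forall]
    refine isOpen_iInter_of_finite fun i => isOpen_iInter_of_finite fun j => ?_
    refine isOpen_lt ?_ continuous_const
    have : Continuous fun x : GL (Fin (2*g)) ℤ_[2] => (x : Matrix (Fin (2*g)) (Fin (2*g)) ℤ_[2]) :=
      Units.continuous_val
    exact ((this.sub continuous_const).matrix_elem i j).norm
  refine Filter.mem_of_superset (hopen.mem_nhds ?_) ?_
  · intro i j; simp
  · intro x hx
    change redMod2 g x ∈ P
    have : redMod2 g x = 1 := by
      apply Units.ext
      rw [coe_red, Units.val_one, ← sub_eq_zero, ← map_one (rho g), ← map_sub]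
      ext i j
      rw [rho_apply]
      have h1 : ((x : Matrix (Fin (2*g)) (Fin (2*g)) ℤ_[2]) - 1) i j ∈ RingHom.ker (PadicInt.toZMod (p := 2)) := by
        rw [PadicInt.ker_toZMod, IsLocalRing.mem_maximalIdeal, PadicInt.mem_nonunits]
        exact hx i j
      exact h1
    rw [this]; exact P.one_mem

lemma closed_sp : IsClosed (SpSet g ℤ_[2]) := by
  have : Continuous fun x : GL (Fin (2*g)) ℤ_[2] => (x : Matrix (Fin (2*g)) (Fin (2*g)) ℤ_[2]) :=
    Units.continuous_val
  exact isClosed_eq ((this.matrix_transpose.matrix_mul continuous_const).matrix_mul this) continuous_const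

end MM

/-- Let `g ≥ 2` and let `H ⊆ GSp_{2g}(ℤ_2)` be a subgroup which is the full preimage (inside
`GSp_{2g}(ℤ_2)`, under mod-2 reduction) of its mod-2 image `H(2)`, and whose mod-2 image
contains the embedded copy of `S_{2g+1}` (the permutations of `S_{2g+2}` fixing the last
coordinate, acting on `W = t^⊥/span(t)`). Then the closure of the commutator subgroup of `H`
equals the full preimage of `[H(2), H(2)]` under the reduction `Sp_{2g}(ℤ_2) → Sp_{2g}(ℤ/2ℤ)`. -/
theorem maximal_monodromy_stmt2 (g : ℕ) (hg : 2 ≤ g)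
    (H : Subgroup (GL (Fin (2*g)) ℤ_[2]))
    (hGSp : (H : Set (GL (Fin (2*g)) ℤ_[2])) ⊆ GSpSet g ℤ_[2])
    (hpre : ∀ x : GL (Fin (2*g)) ℤ_[2], x ∈ GSpSet g ℤ_[2] →
      redMod2 g x ∈ Subgroup.map (redMod2 g) H → x ∈ H)
    (hS : ∀ B : GL (Fin (2*g)) (ZMod 2),
      (∃ σ : Equiv.Perm (Fin (2*g+2)),
        σ ⟨2*g+1, by omega⟩ = (⟨2*g+1, by omega⟩ : Fin (2*g+2)) ∧
        representsPerm g (B : Matrix (Fin (2*g)) (Fin (2*g)) (ZMod 2)) σ) →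
      B ∈ Subgroup.map (redMod2 g) H) :
    closure ((⁅H, H⁆ : Subgroup (GL (Fin (2*g)) ℤ_[2])) : Set (GL (Fin (2*g)) ℤ_[2]))
      = {x : GL (Fin (2*g)) ℤ_[2] | x ∈ SpSet g ℤ_[2] ∧
          redMod2 g x ∈ ⁅Subgroup.map (redMod2 g) H, Subgroup.map (redMod2 g) H⁆} := by
  have hS' : ∀ a b, a ≤ 2*g → b ≤ 2*g → a ≠ b →
      (MM.tv (MM.pv g a + MM.pv g b) 1 : GL (Fin (2*g)) (ZMod 2)) ∈ Subgroup.map (redMod2 g) H := by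
    intro a b ha hb hab
    refine hS _ ⟨Equiv.swap ⟨a, by omega⟩ ⟨b, by omega⟩, ?_, MM.represents hg ha hb hab⟩
    apply Equiv.swap_apply_of_ne_of_ne
    · intro h; have := congrArg Fin.val h; simp only at this; omega
    · intro h; have := congrArg Fin.val h; simp only at this; omega
  apply Set.Subset.antisymm
  · have hcl := (MM.closed_sp (g := g)).inter
      (MM.closed_pre ⁅Subgroup.map (redMod2 g) H, Subgroup.map (redMod2 g) H⁆)
    refine closure_minimal ?_ hcl
    intro x hx
    refine ⟨MM.comm_le_sp H hGSp hx, ?_⟩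
    rw [← Subgroup.map_commutator]
    exact ⟨x, hx, rfl⟩
  · rintro x ⟨hx, hr⟩
    choose y hy A hA using fun k => MM.approx hg H hGSp hpre hS' k x hx hr
    have h1 := MM.tendsto_units (fun k => (y k)⁻¹ * x) A hA
    have h2 : Filter.Tendsto y Filter.atTop (nhds x) := by
      have := (tendsto_const_nhds (x := x)).mul h1.inv
      simpa using this
    exact mem_closure_of_tendsto h2 (Filter.Eventually.of_forall hy)
end

section
/- Let g ≥ 2 and let ℓ be a prime number. The (ℤ/ℓℤ)-linear span of the set of commutators {AB − BA : A, B ∈ 𝔤𝔰𝔭_{2g}(ℤ/ℓℤ)} equals 𝔰𝔭_{2g}(ℤ/ℓℤ). In other words, the derived subalgebra [𝔤𝔰𝔭_{2g}(ℤ/ℓℤ), 𝔤𝔰𝔭_{2g}(ℤ/ℓℤ)] equals 𝔰𝔭_{2g}(ℤ/ℓℤ). -/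
open Matrix

/-- The Lie algebra `𝔤𝔰𝔭_{2g}(R)`: matrices `Λ` with `ΛᵀΩ + ΩΛ = d·Ω` for some `d ∈ R`. -/
def gspSet (g : ℕ) (R : Type) [CommRing R] : Set (Matrix (Fin (2*g)) (Fin (2*g)) R) :=
  {Λ | ∃ d : R, Λᵀ * OmegaMat g R + OmegaMat g R * Λ = d • OmegaMat g R}

/-- The Lie algebra `𝔰𝔭_{2g}(R)`: matrices `Λ` with `ΛᵀΩ + ΩΛ = 0`. -/
def spLieSet (g : ℕ) (R : Type) [CommRing R] : Set (Matrix (Fin (2*g)) (Fin (2*g)) R) :=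
  {Λ | Λᵀ * OmegaMat g R + OmegaMat g R * Λ = 0}

namespace MMAux

variable {n R : Type} [Fintype n] [DecidableEq n] [CommRing R]

/-- Block form of the standard alternating matrix. -/
def JJ (n R : Type) [DecidableEq n] [CommRing R] : Matrix (n ⊕ n) (n ⊕ n) R :=
  fromBlocks 0 1 (-1) 0

theorem single_factor (i j : n) (a : R) :
    ∃ S T : Matrix n n R, Sᵀ = S ∧ Tᵀ = T ∧ single i j a = S * T := by
  by_cases h : i = j
  · subst h
    exact ⟨single i i 1, single i i a, by simp, by simp, by simp⟩
  · refine ⟨single i i 1, single i j a + single j i a, by simp, ?_, ?_⟩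
    · simp [add_comm]
    · rw [mul_add, single_mul_single_same, single_mul_single_of_ne _ _ _ _ h]
      simp

theorem block_mem (K : Submodule R (Matrix (n ⊕ n) (n ⊕ n) R))
    (hK : ∀ X Y : Matrix (n ⊕ n) (n ⊕ n) R,
      (∃ d : R, Xᵀ * JJ n R + JJ n R * X = d • JJ n R) →
      (∃ d : R, Yᵀ * JJ n R + JJ n R * Y = d • JJ n R) → X * Y - Y * X ∈ K)
    (A B C : Matrix n n R) (hB : Bᵀ = B) (hC : Cᵀ = C) :
    fromBlocks A B C (-Aᵀ) ∈ K := by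
  have h1 : fromBlocks 0 B C 0 ∈ K := by
    have := hK (fromBlocks 1 0 0 0) (fromBlocks 0 B (-C) 0)
      ⟨1, by simp [JJ, fromBlocks_transpose, fromBlocks_multiply, fromBlocks_add]⟩
      ⟨0, by simp [JJ, fromBlocks_transpose, fromBlocks_multiply, fromBlocks_add, hB, hC]⟩
    simpa [fromBlocks_multiply, sub_eq_add_neg, fromBlocks_neg, fromBlocks_add] using this
  have h2 : ∀ S T : Matrix n n R, Sᵀ = S → Tᵀ = T →
      fromBlocks (S * T) 0 0 (-(S * T)ᵀ) ∈ K := by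
    intro S T hS hT
    have := hK (fromBlocks 0 S 0 0) (fromBlocks 0 0 T 0)
      ⟨0, by simp [JJ, fromBlocks_transpose, fromBlocks_multiply, fromBlocks_add, hS]⟩
      ⟨0, by simp [JJ, fromBlocks_transpose, fromBlocks_multiply, fromBlocks_add, hT]⟩
    simpa [fromBlocks_multiply, sub_eq_add_neg, fromBlocks_neg, fromBlocks_add, transpose_mul, hS, hT] using this
  have h3 : fromBlocks A 0 0 (-Aᵀ) ∈ K := by
    induction A using Matrix.induction_on' with
    | h_zero => simp
    | h_add p q hp hq =>
      have := K.add_mem hp hq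
      rw [fromBlocks_add] at this
      simpa [add_comm] using this
    | h_std_basis i j a =>
      obtain ⟨S, T, hS, hT, h⟩ := single_factor i j a
      rw [h]
      exact h2 S T hS hT
  have := K.add_mem h3 h1
  rw [fromBlocks_add] at this
  simpa using this

theorem block_form (M : Matrix (n ⊕ n) (n ⊕ n) R) (hM : Mᵀ * JJ n R + JJ n R * M = 0) :
    ∃ A B C : Matrix n n R, Bᵀ = B ∧ Cᵀ = C ∧ M = fromBlocks A B C (-Aᵀ) := by
  obtain ⟨A, B, C, D, rfl⟩ : ∃ A B C D, M = fromBlocks A B C D :=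
    ⟨_, _, _, _, (fromBlocks_toBlocks M).symm⟩
  rw [JJ, fromBlocks_transpose, fromBlocks_multiply, fromBlocks_multiply, fromBlocks_add,
    ← fromBlocks_zero, fromBlocks_inj] at hM
  simp only [mul_zero, zero_mul, mul_one, one_mul, mul_neg, neg_mul, zero_add, add_zero] at hM
  obtain ⟨h1, h2, h3, h4⟩ := hM
  refine ⟨A, B, C, ?_, ?_, ?_⟩
  · exact eq_of_sub_eq_zero (by rw [sub_eq_add_neg, h4])
  · exact (neg_add_eq_zero.mp h1)
  · rw [eq_neg_of_add_eq_zero_right h2]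

def ef (g : ℕ) : Fin g ⊕ Fin g → Fin (2 * g) :=
  Sum.elim (fun i => ⟨2 * i, by omega⟩) (fun i => ⟨2 * i + 1, by omega⟩)

theorem ef_bij (g : ℕ) : Function.Bijective (ef g) := by
  rw [Fintype.bijective_iff_injective_and_card]
  constructor
  · rintro (i | i) (j | j) h <;> simp [ef, Fin.ext_iff] at h ⊢ <;> omega
  · simp; omega

noncomputable def ee (g : ℕ) : Fin g ⊕ Fin g ≃ Fin (2 * g) := Equiv.ofBijective _ (ef_bij g)

theorem omega_eq (g : ℕ) : reindexAlgEquiv R R (ee g) (JJ (Fin g) R) = OmegaMat g R := by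
  rw [coe_reindexAlgEquiv, ← Equiv.eq_symm_apply]
  ext i j
  rcases i with i | i <;> rcases j with j | j <;>
    simp only [JJ, reindex_symm, reindex_apply, submatrix_apply, Equiv.symm_symm, OmegaMat, ee, ef,
      Equiv.ofBijective_apply, Sum.elim_inl, Sum.elim_inr, of_apply, fromBlocks_apply₁₁,
      fromBlocks_apply₁₂, fromBlocks_apply₂₁, fromBlocks_apply₂₂, Matrix.zero_apply, Matrix.neg_apply, Matrix.one_apply,
      Fin.ext_iff] <;>
    split_ifs <;> first | rfl | omega | simp

theorem comm_mem (m : Type) [Fintype m] (W A B : Matrix m m R) (d e : R)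
    (hA : Aᵀ * W + W * A = d • W) (hB : Bᵀ * W + W * B = e • W) :
    (A * B - B * A)ᵀ * W + W * (A * B - B * A) = 0 := by
  have hA' : Aᵀ * W = d • W - W * A := eq_sub_of_add_eq hA
  have hB' : Bᵀ * W = e • W - W * B := eq_sub_of_add_eq hB
  rw [transpose_sub, transpose_mul, transpose_mul, sub_mul, Matrix.mul_assoc, Matrix.mul_assoc,
    hA', hB', mul_sub, mul_sub, ← Matrix.mul_assoc, ← Matrix.mul_assoc, mul_smul_comm,
    mul_smul_comm, hA', hB', sub_mul, sub_mul, mul_sub, smul_mul_assoc, smul_mul_assoc, smul_sub,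
    smul_sub, smul_comm d e, Matrix.mul_assoc, Matrix.mul_assoc]
  abel

theorem reindex_cond (g : ℕ) (X : Matrix (Fin g ⊕ Fin g) (Fin g ⊕ Fin g) R) :
    (reindexAlgEquiv R R (ee g) X)ᵀ * OmegaMat g R + OmegaMat g R * reindexAlgEquiv R R (ee g) X =
    reindexAlgEquiv R R (ee g) (Xᵀ * JJ (Fin g) R + JJ (Fin g) R * X) := by
  rw [map_add, map_mul, map_mul, omega_eq]
  rfl

end MMAux

/-- Let `g ≥ 2` and let `ℓ` be a prime. The `(ℤ/ℓℤ)`-linear span of the set of commutators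
`{AB − BA : A, B ∈ 𝔤𝔰𝔭_{2g}(ℤ/ℓℤ)}` equals `𝔰𝔭_{2g}(ℤ/ℓℤ)`; that is, the derived subalgebra
`[𝔤𝔰𝔭_{2g}(ℤ/ℓℤ), 𝔤𝔰𝔭_{2g}(ℤ/ℓℤ)]` is `𝔰𝔭_{2g}(ℤ/ℓℤ)`. -/
theorem maximal_monodromy_stmt4 (g ℓ : ℕ) (hg : 2 ≤ g) (hℓ : ℓ.Prime) :
    (Submodule.span (ZMod ℓ)
      {X : Matrix (Fin (2*g)) (Fin (2*g)) (ZMod ℓ) |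
        ∃ A B : Matrix (Fin (2*g)) (Fin (2*g)) (ZMod ℓ),
          A ∈ gspSet g (ZMod ℓ) ∧ B ∈ gspSet g (ZMod ℓ) ∧ X = A * B - B * A}
      : Set (Matrix (Fin (2*g)) (Fin (2*g)) (ZMod ℓ)))
    = spLieSet g (ZMod ℓ) := by
  apply Set.Subset.antisymm
  · intro X hX
    induction hX using Submodule.span_induction with
    | mem X h =>
      obtain ⟨A, B, ⟨d, hA⟩, ⟨e, hB⟩, rfl⟩ := h
      exact MMAux.comm_mem _ _ A B d e hA hB
    | zero => simp [spLieSet]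
    | add x y _ _ hx hy =>
      simp only [spLieSet, Set.mem_ofPred_eq] at hx hy ⊢
      rw [transpose_add, add_mul, mul_add, add_add_add_comm, hx, hy, add_zero]
    | smul a x _ hx =>
      simp only [spLieSet, Set.mem_ofPred_eq] at hx ⊢
      rw [transpose_smul, smul_mul_assoc, mul_smul_comm, ← smul_add, hx, smul_zero]
  · intro M hM
    obtain ⟨M, rfl⟩ := (reindexAlgEquiv (ZMod ℓ) (ZMod ℓ) (MMAux.ee g)).surjective M
    simp only [spLieSet, Set.mem_ofPred_eq] at hM
    rw [MMAux.reindex_cond, map_eq_zero_iff _ (AlgEquiv.injective _)] at hM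
    obtain ⟨A, B, C, hB, hC, rfl⟩ := MMAux.block_form M hM
    refine MMAux.block_mem (Submodule.comap
      (reindexAlgEquiv (ZMod ℓ) (ZMod ℓ) (MMAux.ee g)).toLinearMap (Submodule.span _ _))
      ?_ A B C hB hC
    rintro X Y ⟨d, hX⟩ ⟨e, hY⟩
    refine Submodule.subset_span ⟨reindexAlgEquiv (ZMod ℓ) (ZMod ℓ) (MMAux.ee g) X,
      reindexAlgEquiv (ZMod ℓ) (ZMod ℓ) (MMAux.ee g) Y, ⟨d, ?_⟩, ⟨e, ?_⟩, ?_⟩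
    · rw [MMAux.reindex_cond, hX, map_smul, MMAux.omega_eq]
    · rw [MMAux.reindex_cond, hY, map_smul, MMAux.omega_eq]
    · simp only [AlgEquiv.toLinearMap_apply, map_sub, map_mul]
end

section
/- Let g ≥ 2. The closure of the commutator subgroup of the kernel of the reduction map GSp_{2g}(ℤ_2) → GSp_{2g}(ℤ/2ℤ) equals the kernel of the reduction map Sp_{2g}(ℤ_2) → Sp_{2g}(ℤ/4ℤ). -/
open Matrix

/-- Entrywise mod-4 reduction `GL_{2g}(ℤ_2) → GL_{2g}(ℤ/4ℤ)`. -/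
noncomputable def redMod4 (g : ℕ) : GL (Fin (2*g)) ℤ_[2] →* GL (Fin (2*g)) (ZMod (2^2)) :=
  Units.map ((PadicInt.toZModPow 2).mapMatrix.toMonoidHom)

/-- The kernel of the reduction map `GSp_{2g}(ℤ_2) → GSp_{2g}(ℤ/2ℤ)`: the elements of
`GSp_{2g}(ℤ_2)` that reduce to the identity mod 2, as a subgroup of `GL_{2g}(ℤ_2)`. -/
def GSpKer (g : ℕ) : Subgroup (GL (Fin (2*g)) ℤ_[2]) where
  carrier := {x | x ∈ GSpSet g ℤ_[2] ∧ redMod2 g x = 1}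
  one_mem' := by
    refine ⟨⟨1, ?_⟩, MonoidHom.map_one _⟩
    simp
  mul_mem' := by
    rintro a b ⟨⟨m, hm⟩, ha1⟩ ⟨⟨m', hm'⟩, hb1⟩
    refine ⟨⟨m * m', ?_⟩, by rw [MonoidHom.map_mul, ha1, hb1, mul_one]⟩
    have hval : ((a * b : GL (Fin (2*g)) ℤ_[2]) : Matrix (Fin (2*g)) (Fin (2*g)) ℤ_[2])
        = (a : Matrix (Fin (2*g)) (Fin (2*g)) ℤ_[2]) * (b : Matrix (Fin (2*g)) (Fin (2*g)) ℤ_[2]) :=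
      Units.val_mul a b
    rw [hval, Matrix.transpose_mul]
    calc (b : Matrix (Fin (2*g)) (Fin (2*g)) ℤ_[2])ᵀ * (a : Matrix (Fin (2*g)) (Fin (2*g)) ℤ_[2])ᵀ
          * OmegaMat g ℤ_[2]
          * ((a : Matrix (Fin (2*g)) (Fin (2*g)) ℤ_[2]) * (b : Matrix (Fin (2*g)) (Fin (2*g)) ℤ_[2]))
        = (b : Matrix (Fin (2*g)) (Fin (2*g)) ℤ_[2])ᵀ
            * (((a : Matrix (Fin (2*g)) (Fin (2*g)) ℤ_[2])ᵀ * OmegaMat g ℤ_[2]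
              * (a : Matrix (Fin (2*g)) (Fin (2*g)) ℤ_[2]))
            * (b : Matrix (Fin (2*g)) (Fin (2*g)) ℤ_[2])) := by
          simp only [mul_assoc]
      _ = (b : Matrix (Fin (2*g)) (Fin (2*g)) ℤ_[2])ᵀ
            * (((m : ℤ_[2]) • OmegaMat g ℤ_[2]) * (b : Matrix (Fin (2*g)) (Fin (2*g)) ℤ_[2])) := by
          rw [hm]
      _ = (m : ℤ_[2]) • ((b : Matrix (Fin (2*g)) (Fin (2*g)) ℤ_[2])ᵀ * OmegaMat g ℤ_[2]
            * (b : Matrix (Fin (2*g)) (Fin (2*g)) ℤ_[2])) := by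
          simp only [Matrix.smul_mul, Matrix.mul_smul, mul_assoc]
      _ = (m : ℤ_[2]) • ((m' : ℤ_[2]) • OmegaMat g ℤ_[2]) := by rw [hm']
      _ = ((m * m' : ℤ_[2]ˣ) : ℤ_[2]) • OmegaMat g ℤ_[2] := by
          rw [smul_smul, Units.val_mul]
  inv_mem' := by
    rintro a ⟨⟨m, hm⟩, ha1⟩
    refine ⟨⟨m⁻¹, ?_⟩, by rw [MonoidHom.map_inv, ha1, inv_one]⟩
    set A : Matrix (Fin (2*g)) (Fin (2*g)) ℤ_[2] := (a : Matrix (Fin (2*g)) (Fin (2*g)) ℤ_[2]) with hA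
    set B : Matrix (Fin (2*g)) (Fin (2*g)) ℤ_[2] :=
      ((a⁻¹ : GL (Fin (2*g)) ℤ_[2]) : Matrix (Fin (2*g)) (Fin (2*g)) ℤ_[2]) with hB
    have hAB : A * B = 1 := a.mul_inv
    have h2 : OmegaMat g ℤ_[2] = ((m⁻¹ : ℤ_[2]ˣ) : ℤ_[2]) • (Aᵀ * OmegaMat g ℤ_[2] * A) := by
      rw [hm, smul_smul, Units.inv_mul, one_smul]
    calc Bᵀ * OmegaMat g ℤ_[2] * B
        = Bᵀ * (((m⁻¹ : ℤ_[2]ˣ) : ℤ_[2]) • (Aᵀ * OmegaMat g ℤ_[2] * A)) * B := by rw [← h2]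
      _ = ((m⁻¹ : ℤ_[2]ˣ) : ℤ_[2]) • ((Bᵀ * Aᵀ) * OmegaMat g ℤ_[2] * (A * B)) := by
          simp only [Matrix.smul_mul, Matrix.mul_smul, mul_assoc]
      _ = ((m⁻¹ : ℤ_[2]ˣ) : ℤ_[2]) • OmegaMat g ℤ_[2] := by
          rw [← Matrix.transpose_mul, hAB]
          simp


section Aux
open scoped commutatorElement
variable {g : ℕ}

abbrev MM (g : ℕ) := Matrix (Fin (2*g)) (Fin (2*g)) ℤ_[2]

/-- partner index -/
def tauIdx (i : Fin (2*g)) : Fin (2*g) :=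
  if h : (i : ℕ) % 2 = 0 then ⟨i + 1, by omega⟩ else ⟨i - 1, by omega⟩

lemma tau_val (i : Fin (2*g)) :
    ((tauIdx i : Fin (2*g)) : ℕ) = if (i : ℕ) % 2 = 0 then (i : ℕ) + 1 else (i : ℕ) - 1 := by
  unfold tauIdx; split_ifs <;> rfl

noncomputable def sgnIdx (i : Fin (2*g)) : ℤ_[2] := if (i : ℕ) % 2 = 0 then 1 else -1

lemma tau_tau (i : Fin (2*g)) : tauIdx (tauIdx i) = i := by
  apply Fin.ext
  rw [tau_val, tau_val]
  split_ifs <;> omega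

lemma sgn_tau_neg (i : Fin (2*g)) : sgnIdx (tauIdx i) = - sgnIdx i := by
  unfold sgnIdx
  rw [tau_val]
  by_cases h : (i : ℕ) % 2 = 0
  · have : ((i : ℕ) + 1) % 2 ≠ 0 := by omega
    simp [h, this]
  · have : ((i : ℕ) - 1) % 2 = 0 := by omega
    simp [h, this]

lemma sgn_sq (i : Fin (2*g)) : sgnIdx i * sgnIdx i = 1 := by
  unfold sgnIdx; split_ifs <;> simp

lemma sgn_tau (i : Fin (2*g)) : sgnIdx i * sgnIdx (tauIdx i) = -1 := by
  rw [sgn_tau_neg, mul_neg, sgn_sq]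

lemma Omega_apply (i j : Fin (2*g)) :
    OmegaMat g ℤ_[2] i j = if j = tauIdx i then sgnIdx i else 0 := by
  unfold OmegaMat sgnIdx
  simp only [Matrix.of_apply, Fin.ext_iff, tau_val]
  split_ifs <;> first | rfl | (exfalso; omega)

lemma Omega_sq : OmegaMat g ℤ_[2] * OmegaMat g ℤ_[2] = -1 := by
  ext i j
  simp only [Matrix.mul_apply, Omega_apply, Matrix.neg_apply, Matrix.one_apply]
  simp only [ite_mul, zero_mul, Finset.sum_ite_eq', Finset.mem_univ, if_true, tau_tau]
  by_cases h : i = j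
  · subst h; simp [sgn_tau]
  · simp [h, Ne.symm h]

lemma Omega_transpose : (OmegaMat g ℤ_[2])ᵀ = -OmegaMat g ℤ_[2] := by
  ext i j
  simp only [Matrix.transpose_apply, Omega_apply, Matrix.neg_apply]
  by_cases h : j = tauIdx i
  · subst h
    rw [tau_tau]; simp only [if_true]
    exact sgn_tau_neg i
  · have : i ≠ tauIdx j := by rintro rfl; exact h (tau_tau j).symm
    simp [h, this]

/-- transvection -/
noncomputable def transv (V : MM g) (t : ℤ_[2]) : MM g := 1 + t • (V * OmegaMat g ℤ_[2])

lemma transv_mul {V : MM g} (hV : V * OmegaMat g ℤ_[2] * V = 0) (s t : ℤ_[2]) :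
    transv V s * transv V t = transv V (s + t) := by
  unfold transv
  have h : V * OmegaMat g ℤ_[2] * (V * OmegaMat g ℤ_[2]) = 0 := by
    rw [← mul_assoc, hV, zero_mul]
  simp only [add_mul, mul_add, smul_mul_assoc, mul_smul_comm, h, one_mul, mul_one, smul_zero, add_smul]
  module

noncomputable def transvU (V : MM g) (hV : V * OmegaMat g ℤ_[2] * V = 0) (t : ℤ_[2]) :
    GL (Fin (2*g)) ℤ_[2] where
  val := transv V t
  inv := transv V (-t)
  val_inv := by rw [transv_mul hV]; simp [transv]
  inv_val := by rw [transv_mul hV]; simp [transv]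

lemma transv_symp {V : MM g} (hV : V * OmegaMat g ℤ_[2] * V = 0) (hs : Vᵀ = V) (t : ℤ_[2]) :
    (transv V t)ᵀ * OmegaMat g ℤ_[2] * transv V t = OmegaMat g ℤ_[2] := by
  have e : (transv V t)ᵀ = 1 - t • (OmegaMat g ℤ_[2] * V) := by
    simp [transv, Omega_transpose, hs, sub_eq_add_neg]
  rw [e]; unfold transv
  have h : OmegaMat g ℤ_[2] * V * OmegaMat g ℤ_[2] * (V * OmegaMat g ℤ_[2]) = 0 := by
    rw [← mul_assoc, mul_assoc (OmegaMat g ℤ_[2]) V, mul_assoc (OmegaMat g ℤ_[2]), hV]; simp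
  simp only [sub_mul, mul_add, smul_mul_assoc, mul_smul_comm, h, one_mul, mul_one, smul_zero]
  rw [← mul_assoc]; module

lemma vec_isotropic (v : Fin (2*g) → ℤ_[2]) :
    Matrix.vecMulVec v v * OmegaMat g ℤ_[2] * Matrix.vecMulVec v v = 0 := by
  have h0 : v ⬝ᵥ (OmegaMat g ℤ_[2] *ᵥ v) = 0 := by
    have h : v ⬝ᵥ (OmegaMat g ℤ_[2] *ᵥ v) = - (v ⬝ᵥ (OmegaMat g ℤ_[2] *ᵥ v)) := by
      conv_lhs => rw [Matrix.dotProduct_mulVec, ← Matrix.mulVec_transpose, Omega_transpose,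
        Matrix.neg_mulVec, neg_dotProduct, dotProduct_comm]
    have := self_eq_neg.mp h
    exact this
  rw [mul_assoc, Matrix.mul_vecMulVec, Matrix.vecMulVec_mul_vecMulVec, h0]
  simp

lemma redMod2_iff (x : GL (Fin (2*g)) ℤ_[2]) :
    redMod2 g x = 1 ↔ ∃ A : MM g, (x : MM g) = 1 + (2 : ℤ_[2]) • A := by
  have key : ∀ a : ℤ_[2], PadicInt.toZMod a = 0 ↔ ∃ b, a = 2 * b := by
    intro a
    rw [← RingHom.mem_ker, PadicInt.ker_toZMod, PadicInt.maximalIdeal_eq_span_p,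
      Ideal.mem_span_singleton]; rfl
  rw [Units.ext_iff]
  have : ((redMod2 g x : GL (Fin (2*g)) (ZMod 2)) : Matrix _ _ _)
    = (x : MM g).map PadicInt.toZMod := rfl
  rw [this]
  have h1 : ((1 : GL (Fin (2*g)) (ZMod 2)) : Matrix (Fin (2*g)) (Fin (2*g)) (ZMod 2)) = (1 : MM g).map PadicInt.toZMod := by
    simp
  rw [h1]
  constructor
  · intro h
    have : ∀ i j, ∃ b, (x : MM g) i j - (1 : MM g) i j = 2 * b := by
      intro i j
      rw [← key, map_sub, sub_eq_zero]
      exact congrFun (congrFun h i) j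
    choose A hA using this
    refine ⟨Matrix.of A, ?_⟩
    ext i j
    simp [← hA]
  · rintro ⟨A, hA⟩
    ext i j
    have : PadicInt.toZMod ((x : MM g) i j - (1 : MM g) i j) = 0 := by
      rw [key, hA]; exact ⟨A i j, by simp⟩
    rw [map_sub, sub_eq_zero] at this
    simpa using this

lemma redMod4_iff (x : GL (Fin (2*g)) ℤ_[2]) :
    redMod4 g x = 1 ↔ ∃ A : MM g, (x : MM g) = 1 + (4 : ℤ_[2]) • A := by
  have key : ∀ a : ℤ_[2], PadicInt.toZModPow 2 a = 0 ↔ ∃ b, a = 4 * b := by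
    intro a
    rw [← RingHom.mem_ker, PadicInt.ker_toZModPow, 
      Ideal.mem_span_singleton]
    norm_num; rfl
  rw [Units.ext_iff]
  have : ((redMod4 g x : GL (Fin (2*g)) (ZMod (2^2))) : Matrix _ _ _)
    = (x : MM g).map (PadicInt.toZModPow 2) := rfl
  rw [this]
  have h1 : ((1 : GL (Fin (2*g)) (ZMod (2^2))) : Matrix (Fin (2*g)) (Fin (2*g)) (ZMod (2^2))) = (1 : MM g).map (PadicInt.toZModPow 2) := by
    simp
  rw [h1]
  constructor
  · intro h
    have : ∀ i j, ∃ b, (x : MM g) i j - (1 : MM g) i j = 4 * b := by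
      intro i j
      rw [← key, map_sub, sub_eq_zero]
      exact congrFun (congrFun h i) j
    choose A hA using this
    refine ⟨Matrix.of A, ?_⟩
    ext i j
    simp [← hA]
  · rintro ⟨A, hA⟩
    ext i j
    have : PadicInt.toZModPow 2 ((x : MM g) i j - (1 : MM g) i j) = 0 := by
      rw [key, hA]; exact ⟨A i j, by simp⟩
    rw [map_sub, sub_eq_zero] at this
    simpa using this

/-- exact transvections in the commutator subgroup -/
lemma transv_mem {v : Fin (2*g) → ℤ_[2]} (X : GL (Fin (2*g)) ℤ_[2])
    (hX : (X : MM g)ᵀ * OmegaMat g ℤ_[2] * X = -OmegaMat g ℤ_[2]) (h2 : redMod2 g X = 1)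
    (hv : (X : MM g) *ᵥ v = v) (s : ℤ_[2]) :
    transvU (Matrix.vecMulVec v v) (vec_isotropic v) (4 * s) ∈ ⁅GSpKer g, GSpKer g⁆ := by
  set V := Matrix.vecMulVec v v with hVd
  have hV := vec_isotropic v
  have hs : Vᵀ = V := by simp [hVd, Matrix.transpose_vecMulVec]
  have hXV : (X : MM g) * V = V := by rw [hVd, Matrix.mul_vecMulVec, hv]
  have hVX : V * (X : MM g)ᵀ = V := by rw [← hs, ← Matrix.transpose_mul, hXV]
  have hVOX : V * OmegaMat g ℤ_[2] * X = -(V * OmegaMat g ℤ_[2]) := by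
    calc V * OmegaMat g ℤ_[2] * X = V * ((X : MM g)ᵀ * OmegaMat g ℤ_[2] * X) := by
          rw [← mul_assoc, ← mul_assoc, hVX]
      _ = _ := by rw [hX, mul_neg]
  have hXm : X ∈ GSpKer g := ⟨⟨-1, by simpa using hX⟩, h2⟩
  have hTm : transvU V hV (-2 * s) ∈ GSpKer g := by
    refine ⟨⟨1, by rw [Units.val_one, one_smul]; exact transv_symp hV hs (-2 * s)⟩, ?_⟩
    rw [redMod2_iff]
    refine ⟨(-s) • (V * OmegaMat g ℤ_[2]), ?_⟩
    show transv V _ = _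
    rw [transv, smul_smul]; congr 2; ring
  have hc : ⁅X, transvU V hV (-2 * s)⁆ = transvU V hV (4 * s) := by
    rw [commutatorElement_def, mul_inv_eq_iff_eq_mul, mul_inv_eq_iff_eq_mul]
    apply Units.ext
    show (X : MM g) * transv V (-2*s) = transv V (4*s) * transv V (-2*s) * X
    rw [transv_mul hV]
    unfold transv
    rw [mul_add, add_mul, mul_smul_comm, ← mul_assoc, hXV, smul_mul_assoc, hVOX, mul_one, one_mul]
    module
  rw [← hc]
  exact Subgroup.commutator_mem_commutator hXm hTm

/-- sign matrices -/
noncomputable def epsIdx (i j : Fin (2*g)) (k : Fin (2*g)) : ℤ_[2] :=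
  if (k : ℕ) % 2 = (if (k : ℕ) / 2 = i / 2 then (i : ℕ) % 2 else (j : ℕ) % 2) then 1 else -1

lemma eps_sq (i j k : Fin (2*g)) : epsIdx i j k * epsIdx i j k = 1 := by
  unfold epsIdx; split_ifs <;> simp

lemma eps_tau (i j k : Fin (2*g)) : epsIdx i j k * epsIdx i j (tauIdx k) = -1 := by
  have h1 : ((tauIdx k : Fin (2*g)) : ℕ) / 2 = k / 2 := by
    rw [tau_val]; split_ifs <;> omega
  have h2 : ((tauIdx k : Fin (2*g)) : ℕ) % 2 = 1 - k % 2 := by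
    rw [tau_val]; split_ifs <;> omega
  unfold epsIdx
  rw [h1, h2]
  have hc : (if (k : ℕ) / 2 = i / 2 then (i : ℕ) % 2 else (j : ℕ) % 2) < 2 := by
    split_ifs <;> omega
  generalize (if (k : ℕ) / 2 = i / 2 then (i : ℕ) % 2 else (j : ℕ) % 2) = c at *
  by_cases h : (k : ℕ) % 2 = c
  · have h' : ¬ (1 - (k : ℕ) % 2 = c) := by omega
    simp [h, h']
    omega
  · have h' : 1 - (k : ℕ) % 2 = c := by omega
    simp [h, h']

noncomputable def epsU (i j : Fin (2*g)) : GL (Fin (2*g)) ℤ_[2] where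
  val := Matrix.diagonal (epsIdx i j)
  inv := Matrix.diagonal (epsIdx i j)
  val_inv := by rw [Matrix.diagonal_mul_diagonal]; simp [eps_sq]
  inv_val := by rw [Matrix.diagonal_mul_diagonal]; simp [eps_sq]

lemma epsU_symp (i j : Fin (2*g)) :
    (epsU i j : MM g)ᵀ * OmegaMat g ℤ_[2] * (epsU i j : MM g) = -OmegaMat g ℤ_[2] := by
  ext a b
  show ((Matrix.diagonal (epsIdx i j))ᵀ * OmegaMat g ℤ_[2] * Matrix.diagonal (epsIdx i j)) a b = _
  rw [Matrix.diagonal_transpose, Matrix.mul_diagonal, Matrix.diagonal_mul, Matrix.neg_apply,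
    Omega_apply]
  split_ifs with h
  · subst h
    linear_combination sgnIdx a * eps_tau i j a
  · simp

open Classical in
lemma epsU_red (i j : Fin (2*g)) : redMod2 g (epsU i j) = 1 := by
  rw [redMod2_iff]
  refine ⟨Matrix.diagonal fun k => if epsIdx i j k = 1 then 0 else -1, ?_⟩
  show Matrix.diagonal (epsIdx i j) = _
  ext a b
  by_cases h : a = b
  · subst h
    simp only [Matrix.diagonal_apply_eq, Matrix.add_apply, Matrix.one_apply_eq, Matrix.smul_apply]
    have h := eps_sq i j a
    rcases mul_self_eq_one_iff.mp h with h | h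
    · simp [h]
    · have : (-1 : ℤ_[2]) ≠ 1 := by norm_num
      simp [h, this]; norm_num
  · simp [h]

lemma basis_mem (i j : Fin (2*g)) (s : ℤ_[2]) (h : i = j ∨ (i : ℕ) / 2 ≠ j / 2) (v : Fin (2*g) → ℤ_[2])
    (hv : ∀ k, k ≠ i → k ≠ j → v k = 0) :
    transvU (Matrix.vecMulVec v v) (vec_isotropic v) (4 * s) ∈ ⁅GSpKer g, GSpKer g⁆ := by
  apply transv_mem (epsU i j) (epsU_symp i j) (epsU_red i j)
  show Matrix.diagonal (epsIdx i j) *ᵥ v = v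
  ext k
  rw [Matrix.mulVec_diagonal]
  by_cases h1 : k = i
  · subst h1; simp [epsIdx]
  by_cases h2 : k = j
  · subst h2
    have : (k : ℕ) / 2 ≠ i / 2 := by
      rcases h with h | h
      · exact absurd h.symm h1
      · exact h.symm
    simp [epsIdx, this]
  simp [hv k h1 h2]

lemma pair_mem (i j : Fin (2*g)) (s : ℤ_[2]) (hij : i ≠ j) :
    transvU (Matrix.vecMulVec (Pi.single i 1 + Pi.single j 1) (Pi.single i 1 + Pi.single j 1))
      (vec_isotropic _) (4 * s) ∈ ⁅GSpKer g, GSpKer g⁆ := by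
  by_cases h : (i : ℕ) / 2 ≠ j / 2
  · apply basis_mem i j s (Or.inr h)
    intro k h1 h2; simp [h1, h2]
  push Not at h
  have hj : j = tauIdx i := by
    unfold tauIdx
    have : (i : ℕ) ≠ j := fun h => hij (Fin.ext h)
    ext; split_ifs <;> simp <;> omega
  set e : Fin (2*g) → ℤ_[2] := Pi.single i 1 with he
  set f : Fin (2*g) → ℤ_[2] := Pi.single j 1 with hf
  have hV := vec_isotropic e
  have hs : (Matrix.vecMulVec e e)ᵀ = Matrix.vecMulVec e e := by simp [Matrix.transpose_vecMulVec]
  set T := transvU _ hV (sgnIdx i) with hT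
  have hTs : (T : MM g)ᵀ * OmegaMat g ℤ_[2] * T = OmegaMat g ℤ_[2] := transv_symp hV hs _
  have hTs' : ((T⁻¹ : GL _ _) : MM g)ᵀ * OmegaMat g ℤ_[2] * ((T⁻¹ : GL _ _) : MM g) = OmegaMat g ℤ_[2] :=
    transv_symp hV hs _
  have hTf : (T : MM g) *ᵥ f = e + f := by
    show transv _ _ *ᵥ f = _
    rw [transv, Matrix.add_mulVec, Matrix.one_mulVec, Matrix.smul_mulVec, Matrix.vecMulVec_mul]
    have : e ᵥ* OmegaMat g ℤ_[2] ⬝ᵥ f = sgnIdx i := by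
      simp [he, hf, Omega_apply, hj]
    have hss : sgnIdx i * sgnIdx i = 1 := by unfold sgnIdx; split_ifs <;> simp
    rw [Matrix.vecMulVec_mulVec, this, add_comm]
    ext k
    simp only [Pi.add_apply, Pi.smul_apply, smul_eq_mul, MulOpposite.smul_eq_mul_unop, MulOpposite.unop_op]
    linear_combination e k * hss
  have hTf' : ((T⁻¹ : GL _ _) : MM g) *ᵥ (e + f) = f := by
    rw [← hTf, Matrix.mulVec_mulVec, ← Units.val_mul]; simp
  apply transv_mem (T * epsU j j * T⁻¹)
  · rw [Units.val_mul, Units.val_mul]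
    have e1 := epsU_symp j j
    generalize ((T⁻¹ : GL _ _) : MM g) = T' at *
    generalize (T : MM g) = T at *
    generalize (epsU j j : MM g) = E at *
    calc _ = T'ᵀ * (Eᵀ * (Tᵀ * OmegaMat g ℤ_[2] * T) * E) * T' := by
          simp only [Matrix.transpose_mul, mul_assoc]
      _ = _ := by rw [hTs, e1, mul_neg, neg_mul, hTs']
  · rw [map_mul, map_mul, epsU_red, map_inv]; simp
  · rw [Units.val_mul, Units.val_mul, ← Matrix.mulVec_mulVec, hTf', ← Matrix.mulVec_mulVec]
    have : (epsU j j : MM g) *ᵥ f = f := by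
      show Matrix.diagonal (epsIdx j j) *ᵥ f = f
      ext k
      rw [Matrix.mulVec_diagonal]
      by_cases h2 : k = j
      · subst h2; simp [epsIdx]
      · simp [hf, h2]
    rw [this, hTf]



/-- a matrix group element agrees with `1 + 2^k A` to the next order -/
def Lset (k : ℕ) : Set (MM g) :=
  {A | ∃ c ∈ (⁅GSpKer g, GSpKer g⁆ : Subgroup (GL (Fin (2*g)) ℤ_[2])), ∃ N : MM g,
    (c : MM g) = 1 + (2 ^ k : ℤ_[2]) • A + (2 ^ (k+1) : ℤ_[2]) • N}

lemma Lset_add_two {k : ℕ} {A : MM g} (h : A ∈ Lset k) (B : MM g) : A + (2 : ℤ_[2]) • B ∈ Lset k := by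
  obtain ⟨c, hc, N, h⟩ := h
  refine ⟨c, hc, N - B, ?_⟩
  rw [h, pow_succ]; module

lemma Lset_zero {k : ℕ} : (0 : MM g) ∈ Lset k := ⟨1, one_mem _, 0, by simp⟩

lemma Lset_add {k : ℕ} {A B : MM g} (hA : A ∈ Lset (k+1)) (hB : B ∈ Lset (k+1)) :
    A + B ∈ Lset (k+1) := by
  obtain ⟨c, hc, N, h⟩ := hA
  obtain ⟨d, hd, M, h'⟩ := hB
  refine ⟨c * d, mul_mem hc hd, N + M + (2 ^ k : ℤ_[2]) • ((A + (2 : ℤ_[2]) • N) * (B + (2 : ℤ_[2]) • M)), ?_⟩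
  rw [Units.val_mul, h, h']
  simp only [add_mul, mul_add, smul_mul_assoc, mul_smul_comm, one_mul, mul_one, pow_succ]
  module

/-- the level group as an additive subgroup of symmetric candidates -/
def Lsub (k : ℕ) : AddSubgroup (MM g) where
  carrier := {B | B * OmegaMat g ℤ_[2] ∈ Lset (k+1)}
  zero_mem' := by simpa using Lset_zero
  add_mem' := by
    intro a b ha hb
    show (a + b) * OmegaMat g ℤ_[2] ∈ Lset (k+1)
    rw [add_mul]; exact Lset_add ha hb
  neg_mem' := by
    intro a ha
    show (-a) * OmegaMat g ℤ_[2] ∈ Lset (k+1)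
    have := Lset_add_two ha (-(a * OmegaMat g ℤ_[2]))
    convert this using 1
    rw [neg_mul]; module

lemma two_mem_Lsub {k : ℕ} (B : MM g) : (2 : ℤ_[2]) • B ∈ Lsub k := by
  show (2 : ℤ_[2]) • B * OmegaMat g ℤ_[2] ∈ Lset (k+1)
  rw [smul_mul_assoc, ← zero_add (_ • _)]
  exact Lset_add_two Lset_zero _

lemma vec_mem_Lsub {k : ℕ} (v : Fin (2*g) → ℤ_[2]) (s : ℤ_[2])
    (h : ∀ s, transvU (Matrix.vecMulVec v v) (vec_isotropic v) (4 * s) ∈ ⁅GSpKer g, GSpKer g⁆) :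
    s • Matrix.vecMulVec v v ∈ Lsub (k + 1) := by
  refine ⟨_, h (2 ^ k * s), 0, ?_⟩
  show transv _ _ = _
  unfold transv
  rw [smul_zero, add_zero, smul_mul_assoc, smul_smul]
  congr 2; ring

lemma diag_mem_Lsub {k : ℕ} (i : Fin (2*g)) (s : ℤ_[2]) :
    Matrix.single i i s ∈ Lsub (k + 1) := by
  have := vec_mem_Lsub (k := k) (Pi.single i 1) s (fun s => basis_mem i i s (Or.inl rfl) _ (by
    intro k h1 _; simp [h1]))
  convert this using 1
  ext a b
  simp [Matrix.single_apply, Matrix.vecMulVec_apply, Pi.single_apply]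
  grind

lemma off_mem_Lsub {k : ℕ} (i j : Fin (2*g)) (hij : i ≠ j) (s : ℤ_[2]) :
    Matrix.single i j s + Matrix.single j i s ∈ Lsub (k + 1) := by
  have := vec_mem_Lsub (k := k) _ s (fun s => pair_mem i j s hij)
  have h2 := sub_mem (sub_mem this (diag_mem_Lsub i s)) (diag_mem_Lsub j s)
  convert h2 using 1
  ext a b
  simp [Matrix.single_apply, Matrix.vecMulVec_apply, Pi.single_apply]
  grind

lemma symm_mem_Lsub {k : ℕ} (B N : MM g) (h : Bᵀ - B = (2 : ℤ_[2]) • N) : B ∈ Lsub (k + 1) := by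
  rw [← QuotientAddGroup.eq_zero_iff]
  have hB : B = ∑ p : Fin (2*g) × Fin (2*g), Matrix.single p.1 p.2 (B p.1 p.2) := by
    rw [Fintype.sum_prod_type]; exact Matrix.matrix_eq_sum_single B
  rw [hB]
  show QuotientAddGroup.mk' (Lsub (k+1)) _ = 0
  rw [map_sum]
  apply Finset.sum_involution (fun p _ => (p.2, p.1))
  · rintro ⟨i, j⟩ _
    rw [← map_add]
    show ((_ : MM g) : MM g ⧸ Lsub (k+1)) = 0
    rw [QuotientAddGroup.eq_zero_iff]
    by_cases hij : i = j
    · subst hij; exact add_mem (diag_mem_Lsub _ _) (diag_mem_Lsub _ _)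
    have h1 := add_mem (off_mem_Lsub (k := k) i j hij (B i j)) (two_mem_Lsub (Matrix.single j i (N i j)))
    convert h1 using 1
    have h2 : B j i - B i j = 2 * N i j := congrFun (congrFun h i) j
    have h3 : B j i = B i j + 2 * N i j := by linear_combination h2
    simp only [h3, Matrix.single_add, Matrix.smul_single, smul_eq_mul, add_assoc]
  · rintro ⟨i, j⟩ _ hne heq
    apply hne
    have : j = i := congrArg Prod.fst heq
    subst this
    exact (QuotientAddGroup.eq_zero_iff _).mpr (diag_mem_Lsub _ _)
  · rintro ⟨i, j⟩ _; exact Finset.mem_univ _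
  · rintro ⟨i, j⟩ _; rfl

/-- symplectic subgroup -/
def SpSub (g : ℕ) : Subgroup (GL (Fin (2*g)) ℤ_[2]) where
  carrier := SpSet g ℤ_[2]
  one_mem' := by simp [SpSet]
  mul_mem' := by
    intro a b ha hb
    simp only [SpSet, Set.mem_ofPred_eq] at *
    rw [Units.val_mul, Matrix.transpose_mul]
    calc _ = (b : MM g)ᵀ * ((a : MM g)ᵀ * OmegaMat g ℤ_[2] * a) * b := by simp only [mul_assoc]
      _ = _ := by rw [ha, hb]
  inv_mem' := by
    intro a ha
    simp only [SpSet, Set.mem_ofPred_eq] at *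
    have h1 : (a : MM g) * ((a⁻¹ : GL _ _) : MM g) = 1 := a.mul_inv
    conv_lhs => rw [← ha]
    calc _ = ((a : MM g) * ((a⁻¹ : GL _ _) : MM g))ᵀ * OmegaMat g ℤ_[2] * ((a : MM g) * ((a⁻¹ : GL _ _) : MM g)) := by
          simp only [mul_assoc, Matrix.transpose_mul]
      _ = _ := by rw [h1]; simp

lemma comm_le : ⁅GSpKer g, GSpKer g⁆ ≤ SpSub g ⊓ (redMod4 g).ker := by
  rw [Subgroup.commutator_le]
  rintro a ⟨⟨m, hm⟩, ha⟩ b ⟨⟨m', hm'⟩, hb⟩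
  refine ⟨?_, ?_⟩
  · have hc : ⁅a, b⁆ * (b * a) = a * b := by rw [commutatorElement_def]; group
    generalize ⁅a, b⁆ = c at *
    show (c : MM g)ᵀ * OmegaMat g ℤ_[2] * c = _
    have key : ∀ (x y : GL (Fin (2*g)) ℤ_[2]) (m m' : ℤ_[2]), 
        (x : MM g)ᵀ * OmegaMat g ℤ_[2] * x = m • OmegaMat g ℤ_[2] →
        (y : MM g)ᵀ * OmegaMat g ℤ_[2] * y = m' • OmegaMat g ℤ_[2] →
        ((x * y : GL (Fin (2*g)) ℤ_[2]) : MM g)ᵀ * OmegaMat g ℤ_[2] * ((x * y : GL (Fin (2*g)) ℤ_[2]) : MM g) = (m * m') • OmegaMat g ℤ_[2] := by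
      intro x y m m' hx hy
      rw [Units.val_mul, Matrix.transpose_mul]
      calc _ = (y : MM g)ᵀ * ((x : MM g)ᵀ * OmegaMat g ℤ_[2] * x) * y := by simp only [mul_assoc]
        _ = _ := by rw [hx, mul_smul_comm, smul_mul_assoc, hy, smul_smul]
    have h1 := key a b m m' hm hm'
    have h2 := key b a m' m hm' hm
    rw [mul_comm (m' : ℤ_[2]), ← h1, ← hc, Units.val_mul c, Matrix.transpose_mul] at h2
    generalize b * a = d at h2
    have hd : (d : MM g) * ((d⁻¹ : GL _ _) : MM g) = 1 := d.mul_inv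
    have hd' : (((d⁻¹ : GL _ _) : MM g))ᵀ * (d : MM g)ᵀ = 1 := by
      rw [← Matrix.transpose_mul, hd]; simp
    calc (c : MM g)ᵀ * OmegaMat g ℤ_[2] * c 
        = ((((d⁻¹ : GL _ _) : MM g))ᵀ * (d : MM g)ᵀ) * ((c : MM g)ᵀ * OmegaMat g ℤ_[2] * c) * ((d : MM g) * ((d⁻¹ : GL _ _) : MM g)) := by
          rw [hd, hd']; simp
      _ = (((d⁻¹ : GL _ _) : MM g))ᵀ * ((d : MM g)ᵀ * (c : MM g)ᵀ * OmegaMat g ℤ_[2] * (c * d)) * ((d⁻¹ : GL _ _) : MM g) := by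
          simp only [mul_assoc]
      _ = ((((d⁻¹ : GL _ _) : MM g))ᵀ * (d : MM g)ᵀ) * OmegaMat g ℤ_[2] * ((d : MM g) * ((d⁻¹ : GL _ _) : MM g)) := by
          rw [← h2]; simp only [mul_assoc]
      _ = _ := by rw [hd, hd']; simp
  · rw [redMod2_iff] at ha hb
    obtain ⟨A, hA⟩ := ha
    obtain ⟨B, hB⟩ := hb
    show redMod4 g _ = 1
    rw [redMod4_iff]
    have hi : ((b * a : GL _ _) : MM g) * (((b * a)⁻¹ : GL _ _) : MM g) = 1 := (b * a).mul_inv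
    refine ⟨(A * B - B * A) * (((b * a)⁻¹ : GL _ _) : MM g), ?_⟩
    have hc : ⁅a, b⁆ = (a * b) * (b * a)⁻¹ := by rw [commutatorElement_def]; group
    rw [hc, Units.val_mul]
    nth_rewrite 1 [← hi]
    rw [← smul_mul_assoc, ← add_mul]
    congr 1
    rw [Units.val_mul, Units.val_mul, hA, hB]
    simp only [add_mul, mul_add, smul_mul_assoc, mul_smul_comm, one_mul, mul_one]
    module

lemma step {k : ℕ} (x : GL (Fin (2*g)) ℤ_[2]) (hx : x ∈ SpSub g) (A : MM g)
    (hA : (x : MM g) = 1 + (2 ^ (k+2) : ℤ_[2]) • A) :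
    ∃ c ∈ (⁅GSpKer g, GSpKer g⁆ : Subgroup (GL (Fin (2*g)) ℤ_[2])), ∃ N : MM g,
      ((x * c⁻¹ : GL (Fin (2*g)) ℤ_[2]) : MM g) = 1 + (2 ^ (k+3) : ℤ_[2]) • N := by
  have hs : (x : MM g)ᵀ * OmegaMat g ℤ_[2] * x = OmegaMat g ℤ_[2] := hx
  set W := OmegaMat g ℤ_[2] with hW
  have e1 : (2 ^ (k+2) : ℤ_[2]) • (Aᵀ * W + W * A + (2 : ℤ_[2]) • ((2^(k+1) : ℤ_[2]) • (Aᵀ * W * A))) = 0 := by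
    rw [hA, Matrix.transpose_add, Matrix.transpose_smul, Matrix.transpose_one] at hs
    rw [← sub_eq_zero] at hs
    rw [← hs]
    simp only [add_mul, mul_add, smul_mul_assoc, mul_smul_comm, one_mul, mul_one]
    module
  have e2 := (smul_eq_zero.mp e1).resolve_left (pow_ne_zero _ two_ne_zero)
  have hB : A * W ∈ Lsub (k + 1) := by
    apply symm_mem_Lsub _ (-((2^(k+1) : ℤ_[2]) • (W * (Aᵀ * W * A) * W)))
    have e3 : W * (Aᵀ * W + W * A + (2 : ℤ_[2]) • ((2^(k+1) : ℤ_[2]) • (Aᵀ * W * A))) * W = 0 := by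
      rw [e2]; simp
    have e4 : W * (Aᵀ * W) * W = - (W * Aᵀ) := by
      rw [← mul_assoc, mul_assoc, Omega_sq]; simp
    have e5 : W * (W * A) * W = - (A * W) := by
      rw [← mul_assoc, Omega_sq]; simp
    rw [mul_add, mul_add, add_mul, add_mul, e4, e5] at e3
    rw [Matrix.transpose_mul, Omega_transpose, ← hW]
    simp only [mul_smul_comm, smul_mul_assoc] at e3
    rw [← sub_eq_zero, ← e3, neg_mul]
    module
  have hA' : A ∈ Lset (k+2) := by
    have := (Lsub (k+1)).neg_mem hB
    have h : (-(A * W)) * W ∈ Lset (k + 1 + 1) := this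
    rwa [neg_mul, mul_assoc, Omega_sq, mul_neg, mul_one, neg_neg] at h
  obtain ⟨c, hc, N, h⟩ := hA'
  refine ⟨c, hc, -(N * ((c⁻¹ : GL _ _) : MM g)), ?_⟩
  have hi : (c : MM g) * ((c⁻¹ : GL _ _) : MM g) = 1 := c.mul_inv
  rw [Units.val_mul]
  nth_rewrite 1 [← hi]
  rw [← neg_mul, ← smul_mul_assoc, ← add_mul, hA, h]
  congr 1
  module

lemma approx (x : GL (Fin (2*g)) ℤ_[2]) (hx : x ∈ SpSub g) (h4 : redMod4 g x = 1) (k : ℕ) :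
    ∃ c ∈ (⁅GSpKer g, GSpKer g⁆ : Subgroup (GL (Fin (2*g)) ℤ_[2])), ∃ N : MM g,
      ((x * c⁻¹ : GL (Fin (2*g)) ℤ_[2]) : MM g) = 1 + (2 ^ (k+2) : ℤ_[2]) • N := by
  induction k with
  | zero =>
    obtain ⟨A, hA⟩ := (redMod4_iff x).mp h4
    refine ⟨1, one_mem _, A, ?_⟩
    rw [inv_one, mul_one, hA]; norm_num
  | succ k ih =>
    obtain ⟨c, hc, N, h⟩ := ih
    obtain ⟨d, hd, M, h'⟩ := step (x * c⁻¹) (mul_mem hx (inv_mem (comm_le hc).1)) N h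
    refine ⟨d * c, mul_mem hd hc, M, ?_⟩
    rw [_root_.mul_inv_rev, ← mul_assoc, h']

lemma tendsto_small (N : ℕ → MM g) :
    Filter.Tendsto (fun k => (1 : MM g) + (2 ^ (k+2) : ℤ_[2]) • N k) Filter.atTop (nhds 1) := by
  have : Filter.Tendsto (fun k => (2 ^ (k+2) : ℤ_[2]) • N k) Filter.atTop (nhds 0) := by
    refine tendsto_pi_nhds.mpr fun i => tendsto_pi_nhds.mpr fun j => ?_
    apply squeeze_zero_norm (a := fun k : ℕ => ((1/2 : ℝ)) ^ (k+2))
    · intro k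
      simp only [Matrix.smul_apply, smul_eq_mul, norm_mul, norm_pow]
      have h2 : ‖(2 : ℤ_[2])‖ = 1/2 := by
        have := PadicInt.norm_p (p := 2)
        norm_num at this ⊢; exact this
      rw [h2]
      exact mul_le_of_le_one_right (by positivity) (PadicInt.norm_le_one _)
    · exact (tendsto_pow_atTop_nhds_zero_of_lt_one (by norm_num) (by norm_num)).comp
        (Filter.tendsto_add_atTop_nat 2)
  simpa using this.const_add 1

lemma closed_target (g : ℕ) :
    IsClosed {x : GL (Fin (2*g)) ℤ_[2] | x ∈ SpSet g ℤ_[2] ∧ redMod4 g x = 1} := by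
  have hv : Continuous (fun x : GL (Fin (2*g)) ℤ_[2] => (x : MM g)) := Units.continuous_val
  apply IsClosed.and
  · apply isClosed_eq
    · fun_prop
    · fun_prop
  · have : {x : GL (Fin (2*g)) ℤ_[2] | redMod4 g x = 1}
      = ⋂ i, ⋂ j, {x : GL (Fin (2*g)) ℤ_[2] | ‖(x : MM g) i j - (1 : MM g) i j‖ ≤ (2 : ℝ) ^ (-2 : ℤ)} := by
      ext x
      simp only [Set.mem_ofPred_eq, Set.mem_iInter]
      rw [redMod4_iff]
      have key : ∀ a : ℤ_[2], ‖a‖ ≤ (2 : ℝ) ^ (-2 : ℤ) ↔ ∃ b, a = 4 * b := by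
        intro a
        have := PadicInt.norm_le_pow_iff_mem_span_pow a 2
        rw [Ideal.mem_span_singleton] at this
        norm_num at this ⊢
        exact this
      simp only [key]
      constructor
      · rintro ⟨A, hA⟩ i j
        exact ⟨A i j, by rw [hA]; simp⟩
      · intro h
        choose A hA using h
        exact ⟨Matrix.of A, by ext i j; simp [← hA]⟩
    show IsClosed {x : GL (Fin (2*g)) ℤ_[2] | redMod4 g x = 1}
    rw [this]
    refine isClosed_iInter fun i => isClosed_iInter fun j => isClosed_le ?_ continuous_const
    exact ((hv.matrix_elem i j).sub continuous_const).norm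

end Aux

theorem maximal_monodromy_stmt5 (g : ℕ) (hg : 2 ≤ g) :
    closure ((⁅GSpKer g, GSpKer g⁆ : Subgroup (GL (Fin (2*g)) ℤ_[2]))
        : Set (GL (Fin (2*g)) ℤ_[2]))
      = {x : GL (Fin (2*g)) ℤ_[2] | x ∈ SpSet g ℤ_[2] ∧ redMod4 g x = 1} := by
  apply Set.Subset.antisymm
  · exact closure_minimal (fun x hx => comm_le hx) (closed_target g)
  · rintro x ⟨hx, h4⟩
    choose c hc N hN using approx x hx h4
    have hi : ∀ k, (((x * (c k)⁻¹)⁻¹ : GL (Fin (2*g)) ℤ_[2]) : MM g)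
        = 1 + (2 ^ (k+2) : ℤ_[2]) • (-(N k * (((x * (c k)⁻¹)⁻¹ : GL (Fin (2*g)) ℤ_[2]) : MM g))) := by
      intro k
      have h1 : ((x * (c k)⁻¹ : GL (Fin (2*g)) ℤ_[2]) : MM g) * (((x * (c k)⁻¹)⁻¹ : GL (Fin (2*g)) ℤ_[2]) : MM g) = 1 :=
        (x * (c k)⁻¹).mul_inv
      rw [hN k, add_mul, one_mul, smul_mul_assoc] at h1
      nth_rewrite 1 [← h1]
      module
    have ht : Filter.Tendsto (fun k => x * (c k)⁻¹) Filter.atTop (nhds 1) := by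
      rw [Units.isEmbedding_embedProduct.tendsto_nhds_iff]
      have t1 : Filter.Tendsto (fun k => ((x * (c k)⁻¹ : GL (Fin (2*g)) ℤ_[2]) : MM g)) Filter.atTop (nhds 1) := by
        simp_rw [hN]; exact tendsto_small _
      have t2 : Filter.Tendsto (fun k => (((x * (c k)⁻¹)⁻¹ : GL (Fin (2*g)) ℤ_[2]) : MM g)) Filter.atTop (nhds 1) := by
        rw [funext hi]; exact tendsto_small _
      exact t1.prodMk_nhds ((MulOpposite.continuous_op.tendsto _).comp t2)
    have ht2 : Filter.Tendsto c Filter.atTop (nhds x) := by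
      have := (ht.inv).mul_const x
      simpa using this
    exact mem_closure_of_tendsto ht2 (Filter.Eventually.of_forall hc)
end
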